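/- arXiv:1406.0373 — 2 statements merged into one kernel-verified Lean document; each statement's English description precedes it below -/
import Mathlib

section
/- Fix integers k ≥ r ≥ 3 and an alphabet size q ≥ 2, and for each n local functions f_1,…,f_m : [q]^k → [q]^{k−r+1} that all have MDS inverse image of dimension r−1. Let u ∈ ω(1) ∩ o(n), let μ > μ_c(k,r) be a constant, and set m = ⌈μ·n^{r−1}/u(n)^{r−2}⌉. Generate the bipartite graph from the random ensemble, let x* ∈ [q]^n be a planted assignment, set y_a = f_a(x*|_{∂(a)}) for each a, and consider the local marginal polytope LOCAL for these constraints with the additional requirement that b_i(x*_i) = 1 for i = 1,…,u(n). Then there exist α ∈ (0,1) and c > 0 such that, for all sufficiently large n, with probability at least 1 − exp(−c·u(n)) every zero-optimal point of LOCAL has integral part of size at least (1−α)n; in particular the LP relaxation determines linearly many input variables. -/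
open Filter Finset Asymptotics

noncomputable section

/-- Neighborhood `∂(a)` of constraint `a` in the bipartite graph given by `ω`. -/
def nbhd {n m k : ℕ} (ω : Fin m → (Fin k ↪ Fin n)) (a : Fin m) : Finset (Fin n) :=
  Finset.univ.image (ω a)

/-- `V` is a `d`-stopping set: every constraint meets `V` in `0` or at least `d` variables. -/
def IsStoppingSet {n m k : ℕ} (d : ℕ) (ω : Fin m → (Fin k ↪ Fin n))
    (V : Finset (Fin n)) : Prop :=
  ∀ a : Fin m, (nbhd ω a ∩ V).card = 0 ∨ d ≤ (nbhd ω a ∩ V).card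

/-- Probability of an event under the uniform random bipartite-graph ensemble:
each of the `m` constraints independently picks a uniformly random `k`-tuple of
distinct indices from `{1,…,n}` (an embedding `Fin k ↪ Fin n`). -/
def prG (n m k : ℕ) (P : (Fin m → (Fin k ↪ Fin n)) → Prop) : ℝ :=
  letI := Classical.decPred P
  ((Finset.univ.filter P).card : ℝ) / (Fintype.card (Fin m → (Fin k ↪ Fin n)) : ℝ)

/-- `u ∈ ω(1) ∩ o(n)`. -/
def UGood (u : ℕ → ℕ) : Prop :=
  Tendsto (fun n => (u n : ℝ)) atTop atTop ∧
    Tendsto (fun n => (u n : ℝ) / (n : ℝ)) atTop (nhds 0)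

/-- `μ_c(k,r) = binom(k,r)⁻¹ (r-2)^(r-2) / (r (r-1)^(r-1))`. -/
def muc (k r : ℕ) : ℝ :=
  ((k.choose r : ℝ))⁻¹ * (((r : ℝ) - 2) ^ (r - 2) / ((r : ℝ) * ((r : ℝ) - 1) ^ (r - 1)))

/-- `φ_{k,r}(μ,λ,τ) = μ (e^{(k-r+1)λ} - 1) binom(k,r-1) (1+τ)^{r-1} - λτ`. -/
def phiE (k r : ℕ) (μ lam τ : ℝ) : ℝ :=
  μ * (Real.exp (((k : ℝ) - (r : ℝ) + 1) * lam) - 1) * (k.choose (r - 1) : ℝ)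
      * (1 + τ) ^ (r - 1)
    - lam * τ

/-- Membership in the local marginal polytope LOCAL: each `B a` is a distribution on
`[q]^k`, each `b i` is a distribution on `[q]`, and the marginalization conditions hold. -/
def MemLOCAL {n m q k : ℕ} (nb : Fin m → (Fin k ↪ Fin n))
    (b : Fin n → Fin q → ℝ) (B : Fin m → (Fin k → Fin q) → ℝ) : Prop :=
  (∀ i x, 0 ≤ b i x) ∧ (∀ i, ∑ x, b i x = 1) ∧
  (∀ a z, 0 ≤ B a z) ∧ (∀ a, ∑ z, B a z = 1) ∧
  (∀ (a : Fin m) (j : Fin k) (x : Fin q),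
    b (nb a j) x = ∑ z : Fin k → Fin q, if z j = x then B a z else 0)

/-- A point of LOCAL is zero-optimal if each `B a` is supported on `f_a⁻¹(y_a)`. -/
def ZeroOptimal {m q k l : ℕ} (f : Fin m → (Fin k → Fin q) → (Fin l → Fin q))
    (y : Fin m → Fin l → Fin q) (B : Fin m → (Fin k → Fin q) → ℝ) : Prop :=
  ∀ a z, B a z ≠ 0 → f a z = y a

/-- Integral part of a point of LOCAL. -/
def integralPart {n q : ℕ} (b : Fin n → Fin q → ℝ) : Finset (Fin n) :=
  letI := Classical.decPred fun i : Fin n => ∃ x : Fin q, b i x = 1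
  Finset.univ.filter fun i : Fin n => ∃ x : Fin q, b i x = 1

/-- `f : [q]^k → [q]^l` is `w`-wise independent. -/
def WiseIndep (q k l w : ℕ) (f : (Fin k → Fin q) → (Fin l → Fin q)) : Prop :=
  ∀ T : Finset (Fin k), T.card ≤ w → ∀ xT : Fin k → Fin q, ∀ y : Fin l → Fin q,
    (Finset.univ.filter fun x : Fin k → Fin q =>
        (∀ i ∈ T, x i = xT i) ∧ f x = y).card
      = q ^ (k - T.card - l)

/-- Minimum Hamming distance of a code. -/
def minHammingDist {A : Type*} [DecidableEq A] {k : ℕ} (M : Finset (Fin k → A)) : ℕ :=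
  sInf {d | ∃ x ∈ M, ∃ y ∈ M, x ≠ y ∧ hammingDist x y = d}

/-- `M` is an MDS code of length `k` and dimension `r-1`. -/
def IsMDSCode (A : Type*) [Fintype A] [DecidableEq A] (k r : ℕ)
    (M : Finset (Fin k → A)) : Prop :=
  M.card = Fintype.card A ^ (r - 1) ∧ minHammingDist M = k - r + 2

/-- `f` has MDS inverse image of dimension `r-1`. -/
def HasMDSInv (q k r : ℕ) (f : (Fin k → Fin q) → (Fin (k - r + 1) → Fin q)) : Prop :=
  ∀ y : Fin (k - r + 1) → Fin q,
    IsMDSCode (Fin q) k r (Finset.univ.filter fun x => f x = y)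

instance {n m k : ℕ} (d : ℕ) (ω : Fin m → (Fin k ↪ Fin n)) :
    DecidablePred fun V : Finset (Fin n) => IsStoppingSet d ω V := fun V => by
  unfold IsStoppingSet; infer_instance

/-! The integral part of a zero-optimal point is closed under propagation: two words of an MDS
code of dimension `r - 1` that agree on `r - 1` coordinates are equal, so a constraint with
`t = r - 1` integral variables has only integral variables. Hence the integral part contains the
propagation closure of the initially determined set `U`, of size `u`, and it suffices to show that
this closure rarely has fewer than `δ n` elements.

The event that the closure equals `W`, `#W = w`, depends only on the constraints inside `W`, given
that no constraint propagates out of `W`. If few constraints lie inside `W`, compare with the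
thinned ensemble in which every constraint is kept with probability `x < 1`: each constraint
inside `W` costs a factor `x⁻¹`, each other one gains a factor `exp (-(1 - x) p)`, where `p` is
the probability to propagate out of `W`. The closure events for different `W` are disjoint in the
thinned ensemble as well, so no union bound over `W` is needed. About `(w - u) / (k - t)`
constraints inside `W` suffice to determine `W`, and the total gain wins for all `w` precisely
because `(w - u) u ^ (r - 2) / w ^ (r - 1)` attains its maximum at `w = (r - 1) u / (r - 2)`,
which is where `μ_c` comes from. If many constraints lie inside `W`, a Chernoff bound beats the
number of sets `W`. -/

section Mass

variable {α β ι : Type*} [Fintype ι] {w w' : α → ℝ} {P Q R : α → Prop}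

/-- Product weight on `ι → α`, i.e. the law of an i.i.d. family indexed by `ι` with marginal `w`. -/
def piWeight (w : α → ℝ) (σ : ι → α) : ℝ := ∏ a, w (σ a)

open scoped Classical in
/-- Number of members of the family `σ` satisfying `Q`. -/
def hitCount (Q : α → Prop) (σ : ι → α) : ℕ := #{a | Q (σ a)}

lemma piWeight_nonneg (hw : ∀ s, 0 ≤ w s) (σ : ι → α) : 0 ≤ piWeight w σ :=
  Finset.prod_nonneg fun a _ => hw (σ a)

lemma hitCount_add_hitCount_not (Q : α → Prop) (σ : ι → α) :
    hitCount Q σ + hitCount (fun s => ¬ Q s) σ = Fintype.card ι := by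
  classical
  simpa [hitCount] using Finset.card_filter_add_card_filter_not (s := univ) fun a => Q (σ a)

lemma piWeight_le_pow_mul {C ρ : ℝ} (hw : ∀ s, 0 ≤ w s) (hQ : ∀ s, Q s → w s ≤ C * w' s)
    (hnQ : ∀ s, ¬ Q s → w s ≤ ρ * w' s) (σ : ι → α) :
    piWeight w σ ≤
      C ^ hitCount Q σ * ρ ^ hitCount (fun s => ¬ Q s) σ * piWeight w' σ := by
  classical
  calc piWeight w σ ≤ ∏ a, (if Q (σ a) then C else ρ) * w' (σ a) := by
        refine Finset.prod_le_prod (fun a _ => hw _) fun a _ => ?_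
        split_ifs with h
        exacts [hQ _ h, hnQ _ h]
    _ = C ^ hitCount Q σ * ρ ^ hitCount (fun s => ¬ Q s) σ * piWeight w' σ := by
        simp only [Finset.prod_mul_distrib, Finset.prod_ite, Finset.prod_const, hitCount, piWeight]

section FiniteSpace

variable [Fintype α] [Fintype β]

open scoped Classical in
/-- Total weight of the points satisfying `P`, i.e. the probability of the event `P` when `w` is a
probability vector. -/
def mass (w : α → ℝ) (P : α → Prop) : ℝ := ∑ s with P s, w s

lemma mass_nonneg (hw : ∀ s, 0 ≤ w s) : 0 ≤ mass w P := Finset.sum_nonneg fun s _ => hw s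

lemma mass_true : mass w (fun _ => True) = ∑ s, w s := by simp [mass]

lemma mass_mono (hw : ∀ s, 0 ≤ w s) (h : ∀ s, P s → Q s) : mass w P ≤ mass w Q := by
  classical
  simp only [mass]
  exact Finset.sum_le_sum_of_subset_of_nonneg (Finset.monotone_filter_right _ fun s _ => h s)
    fun s _ _ => hw s

lemma mass_le_mass_of_le (h : ∀ s, P s → w s ≤ w' s) : mass w P ≤ mass w' P := by
  classical
  simp only [mass]
  exact Finset.sum_le_sum fun s hs => h s (Finset.mem_filter.1 hs).2

lemma mass_le_const_mul_mass {C : ℝ} (h : ∀ s, P s → w s ≤ C * w' s) :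
    mass w P ≤ C * mass w' P := by
  simpa only [mass, Finset.mul_sum] using mass_le_mass_of_le (w' := fun s => C * w' s) h

lemma mass_add_mass_not (w : α → ℝ) (P : α → Prop) :
    mass w P + mass w (fun s => ¬ P s) = ∑ s, w s := by
  classical
  simpa only [mass] using Finset.sum_filter_add_sum_filter_not univ P w

lemma mass_le_add_of_imp_or (hw : ∀ s, 0 ≤ w s) (h : ∀ s, P s → Q s ∨ R s) :
    mass w P ≤ mass w Q + mass w R := by
  classical
  calc mass w P ≤ ∑ s ∈ univ.filter Q ∪ univ.filter R, w s :=
        Finset.sum_le_sum_of_subset_of_nonneg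
          (fun s hs => by simpa using h s (Finset.mem_filter.1 hs).2) fun s _ _ => hw s
    _ ≤ mass w Q + mass w R := by
        rw [mass, mass, ← Finset.sum_union_inter]
        simpa using Finset.sum_nonneg fun s _ => hw s

lemma mass_comp (w : α → ℝ) (Q : α → Prop) (f : α → β) (G : β → Prop) :
    mass w (fun s => Q s ∧ G (f s)) = mass (fun b => mass w fun s => Q s ∧ f s = b) G := by
  classical
  simp only [mass]
  rw [← Finset.sum_fiberwise_of_maps_to (t := univ.filter G) (g := f)
    fun s hs => by simpa using (Finset.mem_filter.1 hs).2.2]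
  refine Finset.sum_congr rfl fun b hb => ?_
  rw [Finset.filter_filter]
  refine Finset.sum_congr (Finset.filter_congr fun s _ => ?_) fun _ _ => rfl
  exact ⟨fun h => ⟨h.1.1, h.2⟩, fun h => ⟨⟨h.1, h.2 ▸ (Finset.mem_filter.1 hb).2⟩, h.2⟩⟩

variable [DecidableEq ι]

lemma sum_piWeight (w : α → ℝ) :
    ∑ σ : ι → α, piWeight w σ = (∑ s, w s) ^ Fintype.card ι := by
  classical
  simpa [piWeight] using (Finset.prod_univ_sum (fun _ : ι => (univ : Finset α)) fun _ => w).symm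

lemma mass_piWeight_le_one (hw : ∀ s, 0 ≤ w s) (h : ∑ s, w s ≤ 1) (G : (ι → α) → Prop) :
    mass (piWeight w) G ≤ 1 :=
  calc mass (piWeight w) G ≤ mass (piWeight w) fun _ => True :=
        mass_mono (piWeight_nonneg hw) fun _ _ => trivial
    _ = (∑ s, w s) ^ Fintype.card ι := by rw [mass_true, sum_piWeight]
    _ ≤ 1 := pow_le_one₀ (Finset.sum_nonneg fun s _ => hw s) h

lemma mass_piWeight_comp (w : α → ℝ) (Q : α → Prop) (f : α → β) (G : (ι → β) → Prop) :
    mass (piWeight w) (fun σ : ι → α => (∀ a, Q (σ a)) ∧ G fun a => f (σ a))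
      = mass (piWeight fun b => mass w fun s => Q s ∧ f s = b) G := by
  classical
  simp only [mass, piWeight, Finset.prod_univ_sum]
  rw [← Finset.sum_fiberwise_of_maps_to (t := univ.filter G) (g := fun σ a => f (σ a))
    fun σ hσ => by simpa using (Finset.mem_filter.1 hσ).2.2]
  refine Finset.sum_congr rfl fun π hπ => Finset.sum_congr ?_ fun _ _ => rfl
  replace hπ : G π := (Finset.mem_filter.1 hπ).2
  ext σ
  simp only [Finset.mem_filter, Finset.mem_univ, true_and, Fintype.mem_piFinset, forall_and,
    funext_iff]
  exact ⟨fun h => ⟨h.1.1, h.2⟩, fun h => ⟨⟨h.1, (funext h.2 : _ = π) ▸ hπ⟩, h.2⟩⟩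

lemma mass_hitCount_le_le {C ρ : ℝ} (hw : ∀ s, 0 ≤ w s) (hw' : ∀ s, 0 ≤ w' s) (hC : 1 ≤ C)
    (hρ₀ : 0 ≤ ρ) (hρ₁ : ρ ≤ 1) (hQ : ∀ s, Q s → w s ≤ C * w' s)
    (hnQ : ∀ s, ¬ Q s → w s ≤ ρ * w' s) (G : (ι → α) → Prop) (j : ℕ) :
    mass (piWeight w) (fun σ => G σ ∧ hitCount Q σ ≤ j)
      ≤ C ^ j * ρ ^ (Fintype.card ι - j) * mass (piWeight w') G := by
  calc mass (piWeight w) (fun σ => G σ ∧ hitCount Q σ ≤ j)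
      ≤ C ^ j * ρ ^ (Fintype.card ι - j)
          * mass (piWeight w') (fun σ => G σ ∧ hitCount Q σ ≤ j) := by
        refine mass_le_const_mul_mass fun σ hσ => (piWeight_le_pow_mul hw hQ hnQ σ).trans ?_
        have hcount := hitCount_add_hitCount_not Q σ
        have hC_pow : C ^ hitCount Q σ ≤ C ^ j := pow_le_pow_right₀ hC hσ.2
        have hρ_pow : ρ ^ hitCount (fun s => ¬ Q s) σ ≤ ρ ^ (Fintype.card ι - j) :=
          pow_le_pow_of_le_one hρ₀ hρ₁ (by omega)
        have := piWeight_nonneg hw' σ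
        gcongr
    _ ≤ C ^ j * ρ ^ (Fintype.card ι - j) * mass (piWeight w') G := by
        gcongr
        exact mass_mono (piWeight_nonneg hw') fun _ hσ => hσ.1

-- Chernoff's method: reweight the points of `Q` by `η⁻¹`, which keeps the total weight below one.
lemma mass_le_hitCount_le_pow {η : ℝ} (hw : ∀ s, 0 ≤ w s) (hη₀ : 0 < η) (hη₁ : η ≤ 1)
    (h : η⁻¹ * mass w Q + mass w (fun s => ¬ Q s) ≤ 1) (j : ℕ) :
    mass (piWeight w) (fun σ : ι → α => j ≤ hitCount Q σ) ≤ η ^ j := by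
  classical
  let g : α → ℝ := fun s => if Q s then η⁻¹ * w s else w s
  have hg : ∀ s, 0 ≤ g s := fun s => by
    dsimp only [g]
    split_ifs
    exacts [mul_nonneg (inv_nonneg.2 hη₀.le) (hw s), hw s]
  have hg_sum : ∑ s, g s ≤ 1 := by
    have : ∑ s, g s = η⁻¹ * mass w Q + mass w (fun s => ¬ Q s) := by
      simp only [g, Finset.sum_ite, mass, Finset.mul_sum]
    exact this.trans_le h
  calc mass (piWeight w) (fun σ : ι → α => j ≤ hitCount Q σ)
      ≤ η ^ j * mass (piWeight g) (fun σ : ι → α => j ≤ hitCount Q σ) := by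
        refine mass_le_const_mul_mass fun σ hσ => ?_
        have hreweight : piWeight w σ ≤ η ^ hitCount Q σ * piWeight g σ := by
          simpa using piWeight_le_pow_mul (C := η) (ρ := 1) (w' := g) hw
            (fun s hs => by simp [g, hs, hη₀.ne']) (fun s hs => by simp [g, hs]) σ
        refine hreweight.trans (mul_le_mul_of_nonneg_right ?_ (piWeight_nonneg hg σ))
        exact pow_le_pow_of_le_one hη₀.le hη₁ hσ
    _ ≤ η ^ j := mul_le_of_le_one_right (by positivity) (mass_piWeight_le_one hg hg_sum _)

end FiniteSpace

end Mass

section Propagation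

variable {V ι : Type*} [DecidableEq V] {t : ℕ} {σ : ι → Finset V} {U W S : Finset V}

/-- `W` is closed under the constraint `S` with threshold `t`: as soon as `t` variables of `S` are
determined, i.e. lie in `W`, so are all others. -/
def IsClosedUnder (t : ℕ) (S W : Finset V) : Prop := t ≤ #(S ∩ W) → S ⊆ W

/-- `W` is closed under all constraints of the family `σ`. -/
def IsPropagationClosed (t : ℕ) (σ : ι → Finset V) (W : Finset V) : Prop :=
  ∀ a, IsClosedUnder t (σ a) W

/-- The variables determined from `U` by propagation along the constraints `σ`, encoded as the
intersection of all closed sets containing `U`. -/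
def propagationClosure [Fintype V] (t : ℕ) (σ : ι → Finset V) (U : Finset V) : Finset V :=
  letI := Classical.decPred fun i => ∀ W, U ⊆ W → IsPropagationClosed t σ W → i ∈ W
  univ.filter fun i => ∀ W, U ⊆ W → IsPropagationClosed t σ W → i ∈ W

/-- The constraint `S` if it lies inside `W`, and the vacuous constraint `∅` otherwise. -/
def innerPart (W S : Finset V) : Finset V := if S ⊆ W then S else ∅

lemma isClosedUnder_empty : IsClosedUnder t ∅ W := fun _ => Finset.empty_subset W

lemma innerPart_of_subset (h : S ⊆ W) : innerPart W S = S := if_pos h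

lemma innerPart_of_not_subset (h : ¬ S ⊆ W) : innerPart W S = ∅ := if_neg h

lemma IsPropagationClosed.innerPart {W' : Finset V} (h : IsPropagationClosed t σ W') :
    IsPropagationClosed t (fun a => innerPart W (σ a)) W' := fun a => by
  by_cases hW : σ a ⊆ W
  · simpa only [innerPart_of_subset hW] using h a
  · simpa only [innerPart_of_not_subset hW] using isClosedUnder_empty

section Closure

variable [Fintype V]

lemma mem_propagationClosure {v : V} :
    v ∈ propagationClosure t σ U ↔ ∀ W, U ⊆ W → IsPropagationClosed t σ W → v ∈ W := by
  simp [propagationClosure]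

lemma propagationClosure_subset (hU : U ⊆ W) (hW : IsPropagationClosed t σ W) :
    propagationClosure t σ U ⊆ W :=
  fun _ hi => mem_propagationClosure.1 hi W hU hW

lemma subset_propagationClosure : U ⊆ propagationClosure t σ U :=
  fun _ hi => mem_propagationClosure.2 fun _ hU _ => hU hi

lemma isPropagationClosed_propagationClosure :
    IsPropagationClosed t σ (propagationClosure t σ U) := fun a ha _ hi =>
  mem_propagationClosure.2 fun _ hU hW =>
    hW a (ha.trans (Finset.card_le_card
      (Finset.inter_subset_inter_left (propagationClosure_subset hU hW)))) hi

-- Constraints that are not inside `W` never fire while propagation stays in `W`.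
lemma propagationClosure_eq_iff :
    propagationClosure t σ U = W ↔
      IsPropagationClosed t σ W ∧ propagationClosure t (fun a => innerPart W (σ a)) U = W := by
  constructor
  · rintro rfl
    refine ⟨isPropagationClosed_propagationClosure, ?_⟩
    set W := propagationClosure t σ U
    have hclosed : IsPropagationClosed t σ W := isPropagationClosed_propagationClosure
    set W₀ := propagationClosure t (fun a => innerPart W (σ a)) U
    have hsub : W₀ ⊆ W := propagationClosure_subset subset_propagationClosure hclosed.innerPart
    refine hsub.antisymm (propagationClosure_subset subset_propagationClosure fun a ha => ?_)
    have hinside : σ a ⊆ W :=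
      hclosed a (ha.trans (Finset.card_le_card (Finset.inter_subset_inter_left hsub)))
    have hfire : IsClosedUnder t (innerPart W (σ a)) W₀ := isPropagationClosed_propagationClosure a
    rw [innerPart_of_subset hinside] at hfire
    exact hfire ha
  · rintro ⟨hclosed, hW⟩
    have hU : U ⊆ W := hW ▸ subset_propagationClosure
    refine (propagationClosure_subset hU hclosed).antisymm ?_
    calc W = propagationClosure t (fun a => innerPart W (σ a)) U := hW.symm
      _ ⊆ propagationClosure t σ U := propagationClosure_subset subset_propagationClosure
          isPropagationClosed_propagationClosure.innerPart

end Closure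

end Propagation

section Tilting

variable {V ι : Type*} [DecidableEq V] [Fintype ι] [DecidableEq ι]
  {t : ℕ} {U W : Finset V} {ν : Finset V → ℝ} {x η : ℝ}

/-- Law of a random constraint with law `ν` that is kept with probability `x` and replaced by the
vacuous constraint `∅` otherwise. -/
def thinWeight (x : ℝ) (ν : Finset V → ℝ) (S : Finset V) : ℝ :=
  x * ν S + if S = ∅ then 1 - x else 0

lemma thinWeight_nonneg (hν : ∀ S, 0 ≤ ν S) (hx₀ : 0 ≤ x) (hx₁ : x ≤ 1) (S : Finset V) :
    0 ≤ thinWeight x ν S := by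
  have hkeep := mul_nonneg hx₀ (hν S)
  unfold thinWeight
  split_ifs <;> linarith

lemma le_exp_mul_of_add_le_one {p b : ℝ} (hp : 0 ≤ p) (hx₀ : 0 ≤ x) (hx₁ : x ≤ 1)
    (h : p + b ≤ 1) : p ≤ Real.exp (-((1 - x) * b)) * (x * p + (1 - x)) := by
  have hexp : 1 - (1 - x) * (1 - p) ≤ Real.exp (-((1 - x) * b)) := by
    nlinarith [Real.add_one_le_exp (-((1 - x) * b))]
  have hthin : 0 ≤ x * p + (1 - x) := by nlinarith
  nlinarith [mul_le_mul_of_nonneg_right hexp hthin,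
    mul_nonneg (mul_nonneg hx₀ (sub_nonneg.2 hx₁)) (sq_nonneg (1 - p))]

variable [Fintype V]

/-- Law of the inner part of a random constraint with law `ν`, restricted to the event that `W` is
closed under the constraint; its total weight is smaller than one by `outgoingWeight t W ν`. -/
def innerWeight (t : ℕ) (W : Finset V) (ν : Finset V → ℝ) (T : Finset V) : ℝ :=
  mass ν fun S => IsClosedUnder t S W ∧ innerPart W S = T

/-- Probability that a random constraint with law `ν` propagates from `W` to its complement. -/
def outgoingWeight (t : ℕ) (W : Finset V) (ν : Finset V → ℝ) : ℝ :=
  mass ν fun S => ¬ IsClosedUnder t S W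

lemma innerWeight_nonneg (hν : ∀ S, 0 ≤ ν S) (T : Finset V) : 0 ≤ innerWeight t W ν T :=
  mass_nonneg hν

lemma outgoingWeight_nonneg (hν : ∀ S, 0 ≤ ν S) : 0 ≤ outgoingWeight t W ν := mass_nonneg hν

lemma sum_thinWeight (x : ℝ) (ν : Finset V → ℝ) :
    ∑ S, thinWeight x ν S = x * ∑ S, ν S + (1 - x) := by
  simp [thinWeight, Finset.sum_add_distrib, Finset.mul_sum]

lemma mass_innerWeight (D : Finset V → Prop) :
    mass (innerWeight t W ν) D = mass ν fun S => IsClosedUnder t S W ∧ D (innerPart W S) :=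
  (mass_comp ν (IsClosedUnder t · W) (innerPart W) D).symm

lemma sum_innerWeight_add_outgoingWeight :
    ∑ T, innerWeight t W ν T + outgoingWeight t W ν = ∑ S, ν S := by
  rw [← mass_true, mass_innerWeight, outgoingWeight, ← mass_add_mass_not ν (IsClosedUnder t · W)]
  simp only [and_true]

lemma mass_innerWeight_ne_empty_le (hν : ∀ S, 0 ≤ ν S) :
    mass (innerWeight t W ν) (· ≠ ∅) ≤ mass ν (· ⊆ W) := by
  rw [mass_innerWeight]
  exact mass_mono hν fun S hS => by_contra fun h => hS.2 (innerPart_of_not_subset h)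

lemma mass_propagationClosure_eq :
    mass (piWeight ν) (fun σ : ι → Finset V => propagationClosure t σ U = W)
      = mass (piWeight (innerWeight t W ν)) fun τ : ι → Finset V =>
          propagationClosure t τ U = W :=
  calc mass (piWeight ν) (fun σ : ι → Finset V => propagationClosure t σ U = W)
      = mass (piWeight ν) fun σ : ι → Finset V => (∀ a, IsClosedUnder t (σ a) W) ∧
          propagationClosure t (fun a => innerPart W (σ a)) U = W :=
        congrArg _ (funext fun _ => propext propagationClosure_eq_iff)
    _ = _ := mass_piWeight_comp ν (IsClosedUnder t · W) (innerPart W)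
          fun τ => propagationClosure t τ U = W

lemma innerWeight_le_inv_mul (hx₀ : 0 < x) (hx₁ : x ≤ 1) (T : Finset V) :
    innerWeight t W ν T ≤ x⁻¹ * innerWeight t W (thinWeight x ν) T := by
  refine mass_le_const_mul_mass fun S _ => ?_
  rw [le_inv_mul_iff₀ hx₀, thinWeight]
  split_ifs <;> linarith

lemma innerWeight_thinWeight_empty :
    innerWeight t W (thinWeight x ν) ∅ = x * innerWeight t W ν ∅ + (1 - x) := by
  have hvacuous : IsClosedUnder t ∅ W ∧ innerPart W ∅ = ∅ :=
    ⟨isClosedUnder_empty, innerPart_of_subset (Finset.empty_subset W)⟩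
  simp only [innerWeight, mass, thinWeight, Finset.sum_add_distrib, ← Finset.mul_sum,
    Finset.sum_ite_eq', Finset.mem_filter, Finset.mem_univ, hvacuous, and_self, if_true]

lemma innerWeight_empty_le (hν : ∀ S, 0 ≤ ν S) (hν_sum : ∑ S, ν S = 1) (hx₀ : 0 ≤ x)
    (hx₁ : x ≤ 1) :
    innerWeight t W ν ∅ ≤
      Real.exp (-((1 - x) * outgoingWeight t W ν)) * innerWeight t W (thinWeight x ν) ∅ := by
  rw [innerWeight_thinWeight_empty]
  refine le_exp_mul_of_add_le_one (innerWeight_nonneg hν ∅) hx₀ hx₁ ?_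
  rw [← hν_sum, ← sum_innerWeight_add_outgoingWeight (t := t) (W := W)]
  gcongr
  exact Finset.single_le_sum (fun T _ => innerWeight_nonneg hν T) (Finset.mem_univ ∅)

/-- Bound for the probability that the closure equals a given set `W` and at most `j` out of `m`
constraints lie inside `W`, relative to the thinned ensemble; `p` is the outgoing weight of `W`. -/
def tiltFactor (x : ℝ) (m j : ℕ) (p : ℝ) : ℝ := x⁻¹ ^ j * Real.exp (-((1 - x) * p)) ^ (m - j)

lemma mass_propagationClosure_eq_le (hν : ∀ S, 0 ≤ ν S) (hν_sum : ∑ S, ν S = 1) (hx₀ : 0 < x)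
    (hx₁ : x ≤ 1) (hη₀ : 0 < η) (hη₁ : η ≤ 1)
    (hη : mass ν (· ⊆ W) ≤ η * outgoingWeight t W ν) (j : ℕ) :
    mass (piWeight ν) (fun σ : ι → Finset V => propagationClosure t σ U = W)
      ≤ tiltFactor x (Fintype.card ι) j (outgoingWeight t W ν)
          * mass (piWeight (thinWeight x ν)) (fun σ : ι → Finset V => propagationClosure t σ U = W)
        + η ^ (j + 1) := by
  have hout : 0 ≤ outgoingWeight t W ν := outgoingWeight_nonneg hν
  have hinner := innerWeight_nonneg (t := t) (W := W) hν
  have hinner_thin := innerWeight_nonneg (t := t) (W := W) (thinWeight_nonneg hν hx₀.le hx₁)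
  rw [mass_propagationClosure_eq (ν := ν), mass_propagationClosure_eq (ν := thinWeight x ν)]
  refine (mass_le_add_of_imp_or (piWeight_nonneg hinner)
    (Q := fun τ => propagationClosure t τ U = W ∧ hitCount (· ≠ ∅) τ ≤ j)
    (R := fun τ => j + 1 ≤ hitCount (· ≠ ∅) τ) fun τ hτ => ?_).trans (add_le_add ?_ ?_)
  · rcases Nat.lt_or_ge j (hitCount (· ≠ ∅) τ) with h | h
    exacts [Or.inr h, Or.inl ⟨hτ, h⟩]
  · refine mass_hitCount_le_le hinner hinner_thin ((one_le_inv₀ hx₀).2 hx₁) (Real.exp_pos _).le ?_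
      (fun T _ => innerWeight_le_inv_mul hx₀ hx₁ T) (fun T hT => ?_) _ j
    · exact Real.exp_le_one_iff.2 (neg_nonpos.2 (mul_nonneg (sub_nonneg.2 hx₁) hout))
    · rw [not_not.1 hT]
      exact innerWeight_empty_le hν hν_sum hx₀.le hx₁
  · refine mass_le_hitCount_le_pow hinner hη₀ hη₁ ?_ (j + 1)
    have hnonempty : η⁻¹ * mass (innerWeight t W ν) (· ≠ ∅) ≤ outgoingWeight t W ν :=
      (inv_mul_le_iff₀ hη₀).2 ((mass_innerWeight_ne_empty_le hν).trans hη)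
    have hempty : mass (innerWeight t W ν) (fun T => ¬ T ≠ ∅) ≤ ∑ T, innerWeight t W ν T :=
      mass_true (w := innerWeight t W ν) ▸ mass_mono hinner fun _ _ => trivial
    linarith [sum_innerWeight_add_outgoingWeight (t := t) (W := W) (ν := ν)]

lemma mass_propagationClosure_le (hν : ∀ S, 0 ≤ ν S) (hν_sum : ∑ S, ν S = 1) (hx₀ : 0 < x)
    (hx₁ : x ≤ 1) {β : ℝ} (D : Finset V → Prop) (j : Finset V → ℕ) (η : Finset V → ℝ)
    (hη₀ : ∀ W, U ⊆ W → D W → 0 < η W) (hη₁ : ∀ W, U ⊆ W → D W → η W ≤ 1)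
    (hη : ∀ W, U ⊆ W → D W → mass ν (· ⊆ W) ≤ η W * outgoingWeight t W ν) (hβ₀ : 0 ≤ β)
    (hβ : ∀ W, U ⊆ W → D W →
      tiltFactor x (Fintype.card ι) (j W) (outgoingWeight t W ν) ≤ β) :
    mass (piWeight ν) (fun σ : ι → Finset V => D (propagationClosure t σ U))
      ≤ β + mass (fun W => η W ^ (j W + 1)) (fun W => U ⊆ W ∧ D W) := by
  have hthin := thinWeight_nonneg hν hx₀.le hx₁
  have hthin_sum : ∑ S, thinWeight x ν S ≤ 1 := by rw [sum_thinWeight, hν_sum]; linarith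
  have hfiber : ∀ ν : Finset V → ℝ,
      mass (piWeight ν) (fun σ : ι → Finset V => D (propagationClosure t σ U))
        = mass (fun W => mass (piWeight ν)
            fun σ : ι → Finset V => propagationClosure t σ U = W) (fun W => U ⊆ W ∧ D W) :=
    fun ν => by
      simpa only [true_and, subset_propagationClosure] using mass_comp (piWeight ν)
        (fun _ => True) (fun σ : ι → Finset V => propagationClosure t σ U) fun W => U ⊆ W ∧ D W
  calc mass (piWeight ν) (fun σ : ι → Finset V => D (propagationClosure t σ U))
      ≤ mass (fun W => β * mass (piWeight (thinWeight x ν))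
          (fun σ : ι → Finset V => propagationClosure t σ U = W) + η W ^ (j W + 1))
            (fun W => U ⊆ W ∧ D W) := by
        rw [hfiber]
        refine mass_le_mass_of_le fun W ⟨hUW, hD⟩ => ?_
        refine (mass_propagationClosure_eq_le hν hν_sum hx₀ hx₁ (hη₀ W hUW hD) (hη₁ W hUW hD)
          (hη W hUW hD) (j W)).trans ?_
        gcongr
        exacts [mass_nonneg (piWeight_nonneg hthin), hβ W hUW hD]
    _ = β * mass (piWeight (thinWeight x ν))
            (fun σ : ι → Finset V => D (propagationClosure t σ U))
          + mass (fun W => η W ^ (j W + 1)) (fun W => U ⊆ W ∧ D W) := by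
        rw [hfiber]
        simp only [mass, Finset.sum_add_distrib, Finset.mul_sum]
    _ ≤ β + mass (fun W => η W ^ (j W + 1)) (fun W => U ⊆ W ∧ D W) := by
        gcongr
        exact mul_le_of_le_one_right hβ₀ (mass_piWeight_le_one hthin hthin_sum _)

end Tilting

lemma mass_superset_le {V : Type*} [Fintype V] [DecidableEq V] {g : ℕ → ℝ} (hg : ∀ s, 0 ≤ g s)
    (U : Finset V) :
    mass (fun W => g #(W \ U)) (U ⊆ ·)
      ≤ ∑ s ∈ range (Fintype.card V + 1), ((Fintype.card V).choose s : ℝ) * g s := by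
  classical
  have hinj : Set.InjOn (· \ U) (univ.filter (U ⊆ ·) : Finset (Finset V)) := fun W hW W' hW' h => by
    simp only [Finset.coe_filter, Finset.mem_univ, true_and, Set.mem_ofPred_eq] at hW hW'
    rw [← Finset.sdiff_union_of_subset hW, ← Finset.sdiff_union_of_subset hW']
    exact congrArg (· ∪ U) h
  calc mass (fun W => g #(W \ U)) (U ⊆ ·)
      = ∑ S ∈ (univ.filter (U ⊆ ·)).image (· \ U), g #S := by
        rw [Finset.sum_image hinj]
        simp only [mass]
    _ ≤ ∑ S ∈ (univ : Finset V).powerset, g #S :=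
        Finset.sum_le_sum_of_subset_of_nonneg (fun S _ => by simp) fun S _ _ => hg _
    _ = ∑ s ∈ range (Fintype.card V + 1), ((Fintype.card V).choose s : ℝ) * g s := by
        simpa only [nsmul_eq_mul, Finset.card_univ] using
          Finset.sum_powerset_apply_card g (x := (univ : Finset V))

section Ensemble

variable {κ V : Type*} {T : Finset κ} {W : Finset V} {t : ℕ}

open scoped Classical in
/-- The embedding which is `f` on `T` and `g` on the complement of `T`. -/
def glueEmbedding (f : T ↪ W) (g : {j // j ∉ T} ↪ {v // v ∉ W}) : κ ↪ V where
  toFun j := if hj : j ∈ T then f ⟨j, hj⟩ else g ⟨j, hj⟩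
  inj' := Function.Injective.dite (· ∈ T) (Subtype.val_injective.comp f.injective)
    (Subtype.val_injective.comp g.injective) fun {x x' hx hx'} h =>
      (g ⟨x', hx'⟩).2 ((congrArg (· ∈ W) h).mp (f ⟨x, hx⟩).2)

lemma glueEmbedding_of_mem (f : T ↪ W) (g : {j // j ∉ T} ↪ {v // v ∉ W}) {j : κ} (hj : j ∈ T) :
    glueEmbedding f g j = f ⟨j, hj⟩ := by
  simp [glueEmbedding, hj]

lemma glueEmbedding_of_notMem (f : T ↪ W) (g : {j // j ∉ T} ↪ {v // v ∉ W}) {j : κ}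
    (hj : j ∉ T) : glueEmbedding f g j = g ⟨j, hj⟩ := by
  simp [glueEmbedding, hj]

lemma glueEmbedding_mem_iff (f : T ↪ W)
    (g : {j // j ∉ T} ↪ {v // v ∉ W}) (j : κ) : glueEmbedding f g j ∈ W ↔ j ∈ T := by
  by_cases hj : j ∈ T
  · simp [glueEmbedding_of_mem f g hj, hj]
  · simpa [glueEmbedding_of_notMem f g hj, hj] using (g ⟨j, hj⟩).2

variable [Fintype κ] [DecidableEq V]

lemma card_image_glueEmbedding_inter (f : T ↪ W)
    (g : {j // j ∉ T} ↪ {v // v ∉ W}) :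
    #(univ.image (glueEmbedding f g) ∩ W) = #T := by
  rw [← Finset.card_image_of_injective T (glueEmbedding f g).injective]
  congr 1
  ext v
  simp only [Finset.mem_inter, Finset.mem_image, Finset.mem_univ, true_and]
  constructor
  · rintro ⟨⟨j, rfl⟩, hj⟩
    exact ⟨j, (glueEmbedding_mem_iff f g j).1 hj, rfl⟩
  · rintro ⟨j, hj, rfl⟩
    exact ⟨⟨j, rfl⟩, (glueEmbedding_mem_iff f g j).2 hj⟩

lemma natCard_image_subset_le (W : Finset V) :
    Nat.card {e : κ ↪ V // univ.image e ⊆ W} ≤ (#W).descFactorial (Fintype.card κ) := by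
  have hmem : ∀ e : {e : κ ↪ V // univ.image e ⊆ W}, ∀ j, e.1 j ∈ W := fun e j =>
    e.2 (Finset.mem_image_of_mem _ (Finset.mem_univ j))
  have hinj : Function.Injective fun e : {e : κ ↪ V // univ.image e ⊆ W} =>
      e.1.codRestrict (W : Set V) (hmem e) := fun e e' h =>
    Subtype.ext (DFunLike.ext _ _ fun j => congrArg Subtype.val (DFunLike.congr_fun h j))
  refine (Nat.card_le_card_of_injective _ hinj).trans_eq ?_
  rw [Nat.card_eq_fintype_card, Fintype.card_embedding_eq]
  simp

lemma not_isClosedUnder_image {e : κ ↪ V} {W : Finset V} (ht : t < Fintype.card κ)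
    (he : #(univ.image e ∩ W) = t) : ¬ IsClosedUnder t (univ.image e) W := fun h => by
  have hsub : univ.image e ⊆ W := h he.ge
  rw [Finset.inter_eq_left.2 hsub, Finset.card_image_of_injective _ e.injective,
    Finset.card_univ] at he
  exact ht.ne' he

lemma choose_mul_descFactorial_le_natCard [Fintype V] (W : Finset V) :
    (Fintype.card κ).choose t * ((#W).descFactorial t *
        (Fintype.card V - #W).descFactorial (Fintype.card κ - t))
      ≤ Nat.card {e : κ ↪ V // #(univ.image e ∩ W) = t} := by
  classical
  let split := Σ T : {T : Finset κ // #T = t}, (T.1 ↪ W) × ({j // j ∉ T.1} ↪ {v // v ∉ W})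
  let glue : split → {e : κ ↪ V // #(univ.image e ∩ W) = t} := fun s =>
    ⟨glueEmbedding s.2.1 s.2.2, (card_image_glueEmbedding_inter _ _).trans s.1.2⟩
  have hglue : Function.Injective glue := by
    rintro ⟨⟨T, hT⟩, f, g⟩ ⟨⟨T', hT'⟩, f', g'⟩ h
    replace h : glueEmbedding f g = glueEmbedding f' g' := congrArg Subtype.val h
    obtain rfl : T = T' := by
      ext j
      rw [← glueEmbedding_mem_iff f g, ← glueEmbedding_mem_iff f' g', h]
    obtain rfl : f = f' := by
      ext j
      rw [← glueEmbedding_of_mem f g j.2, ← glueEmbedding_of_mem f' g' j.2, h]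
    obtain rfl : g = g' := by
      ext j
      rw [← glueEmbedding_of_notMem f g j.2, ← glueEmbedding_of_notMem f g' j.2, h]
    rfl
  have hfiber : ∀ T : {T : Finset κ // #T = t},
      Fintype.card ((T.1 ↪ W) × ({j // j ∉ T.1} ↪ {v // v ∉ W}))
        = (#W).descFactorial t * (Fintype.card V - #W).descFactorial (Fintype.card κ - t) :=
    fun T => by
      simp [Fintype.card_prod, Fintype.card_embedding_eq, Fintype.card_subtype_compl, T.2]
  calc _ = Fintype.card split := by
        rw [Fintype.card_sigma, Finset.sum_congr rfl fun T _ => hfiber T]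
        simp [Fintype.card_finset_len]
    _ ≤ Nat.card {e : κ ↪ V // #(univ.image e ∩ W) = t} := by
        rw [← Nat.card_eq_fintype_card]
        exact Nat.card_le_card_of_injective glue hglue

variable {n m k : ℕ}

/-- Law of the neighborhood of a single random constraint. -/
def edgeWeight (n k : ℕ) (S : Finset (Fin n)) : ℝ :=
  mass (fun _ : Fin k ↪ Fin n => (Fintype.card (Fin k ↪ Fin n) : ℝ)⁻¹) fun e => univ.image e = S

lemma edgeWeight_nonneg (S : Finset (Fin n)) : 0 ≤ edgeWeight n k S :=
  mass_nonneg fun _ => by positivity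

lemma mass_edgeWeight (P : Finset (Fin n) → Prop) :
    mass (edgeWeight n k) P
      = Nat.card {e : Fin k ↪ Fin n // P (univ.image e)} / (n.descFactorial k : ℝ) := by
  classical
  have h := mass_comp (fun _ : Fin k ↪ Fin n => (Fintype.card (Fin k ↪ Fin n) : ℝ)⁻¹)
    (fun _ => True) (fun e => univ.image e) P
  simp only [true_and] at h
  have hedge : mass (edgeWeight n k) P = _ := h.symm
  rw [hedge, Nat.card_eq_fintype_card, Fintype.card_subtype, div_eq_mul_inv]
  simp [mass, Fintype.card_embedding_eq]

lemma sum_edgeWeight (hkn : k ≤ n) : ∑ S, edgeWeight n k S = 1 := by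
  have hpos : (n.descFactorial k : ℝ) ≠ 0 := by
    exact_mod_cast (Nat.pos_of_ne_zero (mt Nat.descFactorial_eq_zero_iff_lt.1 hkn.not_gt)).ne'
  rw [← mass_true, mass_edgeWeight]
  simp [Fintype.card_embedding_eq, hpos]

lemma mass_edgeWeight_subset_le (W : Finset (Fin n)) :
    mass (edgeWeight n k) (· ⊆ W) ≤ ((#W).descFactorial k : ℝ) / n.descFactorial k := by
  rw [mass_edgeWeight]
  have hcard := natCard_image_subset_le (κ := Fin k) W
  rw [Fintype.card_fin] at hcard
  gcongr

lemma le_outgoingWeight_edgeWeight (ht : t < k) (W : Finset (Fin n)) :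
    (k.choose t * ((#W).descFactorial t * (n - #W).descFactorial (k - t)) : ℝ)
        / n.descFactorial k ≤ outgoingWeight t W (edgeWeight n k) := by
  rw [outgoingWeight, mass_edgeWeight]
  have hcard := choose_mul_descFactorial_le_natCard (κ := Fin k) (t := t) W
  have hviolate : Nat.card {e : Fin k ↪ Fin n // #(univ.image e ∩ W) = t}
      ≤ Nat.card {e : Fin k ↪ Fin n // ¬ IsClosedUnder t (univ.image e) W} :=
    Nat.card_le_card_of_injective (Subtype.map id fun e he =>
        not_isClosedUnder_image (by rwa [Fintype.card_fin]) he)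
      (Subtype.map_injective _ Function.injective_id)
  simp only [Fintype.card_fin] at hcard
  gcongr
  exact_mod_cast hcard.trans hviolate

lemma prG_eq_mass (P : (Fin m → (Fin k ↪ Fin n)) → Prop) :
    prG n m k P = mass (piWeight fun _ => (Fintype.card (Fin k ↪ Fin n) : ℝ)⁻¹) P := by
  simp only [prG, mass, piWeight, Finset.sum_const, Finset.prod_const, Finset.card_univ,
    Fintype.card_fun, Nat.cast_pow, nsmul_eq_mul, inv_pow, div_eq_mul_inv]

lemma prG_nbhd (P : (Fin m → Finset (Fin n)) → Prop) :
    prG n m k (fun ω => P (nbhd ω)) = mass (piWeight (edgeWeight n k)) P := by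
  have h := mass_piWeight_comp (ι := Fin m)
    (fun _ : Fin k ↪ Fin n => (Fintype.card (Fin k ↪ Fin n) : ℝ)⁻¹) (fun _ => True)
    (fun e => univ.image e) P
  simp only [implies_true, true_and] at h
  exact (prG_eq_mass _).trans h

lemma prG_mono {P Q : (Fin m → (Fin k ↪ Fin n)) → Prop} (h : ∀ ω, P ω → Q ω) :
    prG n m k P ≤ prG n m k Q := by
  rw [prG_eq_mass, prG_eq_mass]
  exact mass_mono (piWeight_nonneg fun _ => by positivity) h

lemma one_sub_prG_le (hkn : k ≤ n) {P Q : (Fin m → (Fin k ↪ Fin n)) → Prop}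
    (h : ∀ ω, P ω ∨ Q ω) : 1 - prG n m k Q ≤ prG n m k P := by
  have : Nonempty (Fin k ↪ Fin n) := ⟨Fin.castLEEmb hkn⟩
  rw [sub_le_iff_le_add, prG_eq_mass, prG_eq_mass]
  calc (1 : ℝ) = mass (piWeight fun _ => (Fintype.card (Fin k ↪ Fin n) : ℝ)⁻¹)
        fun _ : Fin m → (Fin k ↪ Fin n) => True := by
        rw [mass_true, sum_piWeight, Finset.sum_const, Finset.card_univ, nsmul_eq_mul,
          mul_inv_cancel₀ (Nat.cast_ne_zero.2 Fintype.card_ne_zero), one_pow]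
    _ ≤ _ := mass_le_add_of_imp_or (piWeight_nonneg fun _ => by positivity) fun ω _ => h ω

end Ensemble

section Estimates

lemma sub_pow_le_descFactorial {a d : ℕ} (hda : d ≤ a) :
    ((a : ℝ) - d) ^ d ≤ a.descFactorial d := by
  have hpow : (a - d) ^ d ≤ a.descFactorial d :=
    (Nat.pow_le_pow_left (by omega) d).trans (Nat.pow_sub_le_descFactorial a d)
  rw [← Nat.cast_sub hda]
  exact_mod_cast hpow

lemma one_sub_mul_pow_le_descFactorial {a d : ℕ} {N ε : ℝ} (hN : 0 < N) (hda : d ≤ a)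
    (h : d * (N - a + d) ≤ ε * N) : (1 - ε) * N ^ d ≤ a.descFactorial d := by
  have hda' : (d : ℝ) ≤ a := by exact_mod_cast hda
  have hratio : ((a : ℝ) - d) / N = 1 + -((N - a + d) / N) := by field_simp; ring
  have hbernoulli : 1 - ε ≤ (((a : ℝ) - d) / N) ^ d := by
    have hpos : 0 ≤ ((a : ℝ) - d) / N := div_nonneg (sub_nonneg.2 hda') hN.le
    have hloss : d * ((N - a + d) / N) ≤ ε := by rwa [← mul_div_assoc, div_le_iff₀ hN]
    rw [hratio] at hpos ⊢
    linarith [one_add_mul_le_pow (a := -((N - a + d) / N)) (by linarith) d]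
  calc (1 - ε) * N ^ d ≤ (((a : ℝ) - d) / N) ^ d * N ^ d := by gcongr
    _ = ((a : ℝ) - d) ^ d := by rw [← mul_pow, div_mul_cancel₀ _ hN.ne']
    _ ≤ a.descFactorial d := sub_pow_le_descFactorial hda

variable {n k t : ℕ}

lemma one_sub_sq_mul_le_outgoingWeight (htk : t < k) (hkn : k ≤ n) {W : Finset (Fin n)}
    {ε : ℝ} (hε : ε ≤ 1) (hW₀ : W.Nonempty) (ht : t ≤ #W) (hW : (t : ℝ) ^ 2 ≤ ε * #W)
    (hWn : #W + (k - t) ≤ n) (hn : ((k - t : ℕ) : ℝ) * (#W + (k - t : ℕ)) ≤ ε * n) :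
    (1 - ε) ^ 2 * k.choose t * ((#W : ℝ) / n) ^ t ≤ outgoingWeight t W (edgeWeight n k) := by
  have hn₀ : (0 : ℝ) < n := by exact_mod_cast (by omega : 0 < n)
  have hinside : (1 - ε) * (#W : ℝ) ^ t ≤ (#W).descFactorial t :=
    one_sub_mul_pow_le_descFactorial (by exact_mod_cast hW₀.card_pos) ht (by linarith)
  have houtside : (1 - ε) * (n : ℝ) ^ (k - t) ≤ (n - #W).descFactorial (k - t) := by
    refine one_sub_mul_pow_le_descFactorial hn₀ (by omega) ?_
    rw [Nat.cast_sub (by omega : #W ≤ n)]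
    linarith
  refine le_trans ?_ (le_outgoingWeight_edgeWeight htk W)
  rw [le_div_iff₀ (by exact_mod_cast Nat.descFactorial_pos.2 hkn)]
  calc (1 - ε) ^ 2 * k.choose t * ((#W : ℝ) / n) ^ t * n.descFactorial k
      ≤ (1 - ε) ^ 2 * k.choose t * ((#W : ℝ) / n) ^ t * (n : ℝ) ^ (t + (k - t)) := by
        rw [Nat.add_sub_cancel' htk.le]
        gcongr
        exact_mod_cast Nat.descFactorial_le_pow n k
    _ = k.choose t * (((1 - ε) * (#W : ℝ) ^ t) * ((1 - ε) * (n : ℝ) ^ (k - t))) := by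
        rw [pow_add, div_pow]
        field_simp
    _ ≤ k.choose t * ((#W).descFactorial t * (n - #W).descFactorial (k - t)) := by
        have := sub_nonneg.2 hε
        gcongr

lemma mass_edgeWeight_subset_le_mul_outgoingWeight (htk : t < k) {W : Finset (Fin n)}
    (hWn : 2 * (#W + k) ≤ n) :
    mass (edgeWeight n k) (· ⊆ W)
      ≤ (2 * (#W : ℝ) / n) ^ (k - t) * outgoingWeight t W (edgeWeight n k) := by
  have hn₀ : (0 : ℝ) < n := by exact_mod_cast (by omega : 0 < n)
  have hWn' : 2 * ((#W : ℝ) + k) ≤ n := by exact_mod_cast hWn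
  have hhalf : ((n : ℝ) / 2) ^ (k - t) ≤ (n - #W).descFactorial (k - t) := by
    refine le_trans ?_ (sub_pow_le_descFactorial (by omega))
    rw [Nat.cast_sub (by omega), Nat.cast_sub htk.le]
    gcongr
    linarith [(Nat.cast_nonneg t : (0 : ℝ) ≤ t)]
  have hsplit : ((#W).descFactorial k : ℝ) ≤ (#W : ℝ) ^ (k - t) * (#W).descFactorial t := by
    rw [← Nat.descFactorial_mul_descFactorial htk.le]
    exact_mod_cast Nat.mul_le_mul_right _ ((Nat.descFactorial_le_pow _ _).trans
      (Nat.pow_le_pow_left (Nat.sub_le _ _) _))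
  have hchoose : (1 : ℝ) ≤ k.choose t := by exact_mod_cast Nat.choose_pos htk.le
  have hcount : ((#W).descFactorial k : ℝ) ≤ (2 * (#W : ℝ) / n) ^ (k - t) *
      (k.choose t * ((#W).descFactorial t * (n - #W).descFactorial (k - t))) :=
    calc ((#W).descFactorial k : ℝ) ≤ (#W : ℝ) ^ (k - t) * (#W).descFactorial t := hsplit
      _ = (2 * (#W : ℝ) / n) ^ (k - t) *
          (1 * ((#W).descFactorial t * ((n : ℝ) / 2) ^ (k - t))) := by
          rw [mul_div_assoc, mul_pow, div_pow, div_pow]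
          field_simp
      _ ≤ _ := by gcongr
  calc mass (edgeWeight n k) (· ⊆ W) ≤ ((#W).descFactorial k : ℝ) / n.descFactorial k :=
        mass_edgeWeight_subset_le W
    _ ≤ (2 * (#W : ℝ) / n) ^ (k - t) *
          ((k.choose t * ((#W).descFactorial t * (n - #W).descFactorial (k - t)))
            / n.descFactorial k) := by
        rw [← mul_div_assoc]
        gcongr
    _ ≤ _ := by
        gcongr
        exact le_outgoingWeight_edgeWeight htk W

-- Bernoulli's inequality for `(w p / ((p + 1) u)) ^ (p + 1)`; equality holds at `w p = (p + 1) u`.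
lemma succ_pow_mul_pow_mul_sub_le (p : ℕ) {u w : ℝ} (hu : 0 < u) (hw : 0 ≤ w) :
    ((p : ℝ) + 1) ^ (p + 1) * u ^ p * (w - u) ≤ (p : ℝ) ^ p * w ^ (p + 1) := by
  rcases Nat.eq_zero_or_pos p with rfl | hp
  · simpa using hu.le
  have hp₀ : (0 : ℝ) < p := by exact_mod_cast hp
  have hbernoulli : p * (w - u) / u ≤ (w * p / ((p + 1) * u)) ^ (p + 1) := by
    have hratio : 0 ≤ w * p / ((p + 1) * u) := by positivity
    refine le_of_eq_of_le ?_ ((one_add_mul_le_pow (a := w * p / ((p + 1) * u) - 1)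
      (by linarith) (p + 1)).trans_eq (by rw [add_sub_cancel]))
    push_cast
    field_simp
    ring
  rw [div_pow, div_le_div_iff₀ hu (by positivity), mul_pow, mul_pow] at hbernoulli
  refine le_of_mul_le_mul_left ?_ (mul_pos hp₀ hu)
  calc (p : ℝ) * u * (((p : ℝ) + 1) ^ (p + 1) * u ^ p * (w - u))
      = p * (w - u) * (((p : ℝ) + 1) ^ (p + 1) * u ^ (p + 1)) := by ring
    _ ≤ w ^ (p + 1) * (p : ℝ) ^ (p + 1) * u := hbernoulli
    _ = (p : ℝ) * u * ((p : ℝ) ^ p * w ^ (p + 1)) := by ring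

lemma muc_pos (ht : 1 ≤ t) (htk : t < k) : 0 < muc k (t + 1) := by
  obtain ⟨p, rfl⟩ : ∃ p, t = p + 1 := ⟨t - 1, by omega⟩
  have hchoose : (0 : ℝ) < k.choose (p + 1 + 1) := by exact_mod_cast Nat.choose_pos htk
  have hpow : (0 : ℝ) < (p : ℝ) ^ p := by exact_mod_cast Nat.pow_self_pos
  have hsub₂ : ((p + 1 + 1 : ℕ) : ℝ) - 2 = p := by push_cast; ring
  have hsub₁ : ((p + 1 + 1 : ℕ) : ℝ) - 1 = p + 1 := by push_cast; ring
  rw [muc, hsub₂, hsub₁, Nat.add_sub_cancel (n := p) (m := 2)]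
  positivity

lemma choose_mul_muc (p : ℕ) (hpk : p + 1 < k) :
    (k.choose (p + 1) : ℝ) * muc k (p + 2)
      = (p : ℝ) ^ p / (((p : ℝ) + 1) ^ (p + 1) * (k - (p + 1) : ℕ)) := by
  have hrec : (k.choose (p + 2) : ℝ) * ((p : ℝ) + 2) = k.choose (p + 1) * (k - (p + 1) : ℕ) := by
    exact_mod_cast Nat.choose_succ_right_eq k (p + 1)
  have hchoose : (0 : ℝ) < k.choose (p + 2) := by exact_mod_cast Nat.choose_pos hpk
  have hd : (0 : ℝ) < (k - (p + 1) : ℕ) := by exact_mod_cast Nat.sub_pos_of_lt hpk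
  have hsub₂ : ((p + 2 : ℕ) : ℝ) - 2 = p := by push_cast; ring
  have hsub₁ : ((p + 2 : ℕ) : ℝ) - 1 = p + 1 := by push_cast; ring
  rw [muc, hsub₂, hsub₁, Nat.add_sub_cancel, Nat.add_sub_assoc one_le_two, inv_mul_eq_div, div_div,
    mul_div_assoc', div_eq_div_iff (by positivity) (by positivity)]
  push_cast
  linear_combination (-(p : ℝ) ^ p * ((p : ℝ) + 1) ^ (p + 1)) * hrec

lemma sub_div_le_choose_mul_muc_mul (ht : 1 ≤ t) (htk : t < k) {u w : ℝ} (hu : 0 < u)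
    (hw : 0 ≤ w) :
    (w - u) / (k - t : ℕ) ≤ k.choose t * muc k (t + 1) * (w ^ t / u ^ (t - 1)) := by
  obtain ⟨p, rfl⟩ : ∃ p, t = p + 1 := ⟨t - 1, by omega⟩
  have hd : (0 : ℝ) < (k - (p + 1) : ℕ) := by exact_mod_cast Nat.sub_pos_of_lt htk
  rw [choose_mul_muc p htk, Nat.add_sub_cancel, div_mul_div_comm,
    div_le_div_iff₀ hd (by positivity)]
  calc (w - u) * (((p : ℝ) + 1) ^ (p + 1) * (k - (p + 1) : ℕ) * u ^ p)
      = (((p : ℝ) + 1) ^ (p + 1) * u ^ p * (w - u)) * (k - (p + 1) : ℕ) := by ring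
    _ ≤ (p : ℝ) ^ p * w ^ (p + 1) * (k - (p + 1) : ℕ) := by
        exact mul_le_mul_of_nonneg_right (succ_pow_mul_pow_mul_sub_le p hu hw) hd.le

lemma tiltFactor_le_exp {x ε A B Y c p : ℝ} {m j : ℕ} (hx₀ : 0 < x) (hx₁ : x ≤ 1) (hε : ε ≤ 1)
    (hp : 0 ≤ p) (hY : 0 ≤ Y) (hjA : j ≤ A * Y) (hjm : j ≤ ε * m) (hB : B * Y ≤ p * m)
    (hc : c ≤ Real.log x * A + (1 - x) * (1 - ε) * B) :
    tiltFactor x m j p ≤ Real.exp (-c * Y) := by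
  have hjm' : j ≤ m := by
    exact_mod_cast hjm.trans (mul_le_of_le_one_left (Nat.cast_nonneg m) hε)
  have hlog : 0 ≤ -Real.log x := neg_nonneg.2 (Real.log_nonpos hx₀.le hx₁)
  have hfactor : tiltFactor x m j p
      = Real.exp (-Real.log x * j - (1 - x) * (((m : ℝ) - j) * p)) := by
    rw [tiltFactor, ← Real.exp_log (inv_pos.2 hx₀), Real.log_inv, ← Real.exp_nat_mul,
      ← Real.exp_nat_mul, ← Real.exp_add, Nat.cast_sub hjm']
    congr 1
    ring
  have houter : (1 - ε) * B * Y ≤ ((m : ℝ) - j) * p :=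
    calc (1 - ε) * B * Y = (1 - ε) * (B * Y) := by ring
      _ ≤ (1 - ε) * (p * m) := mul_le_mul_of_nonneg_left hB (sub_nonneg.2 hε)
      _ = (m - ε * m) * p := by ring
      _ ≤ ((m : ℝ) - j) * p := by gcongr
  rw [hfactor, Real.exp_le_exp]
  calc -Real.log x * j - (1 - x) * (((m : ℝ) - j) * p)
      ≤ -Real.log x * (A * Y) - (1 - x) * ((1 - ε) * B * Y) := by
        have := sub_nonneg.2 hx₁
        gcongr
    _ = -(Real.log x * A + (1 - x) * (1 - ε) * B) * Y := by ring
    _ ≤ -c * Y := by gcongr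

lemma pow_le_exp_mul_exp_pow_mul {y ε : ℝ} {u s N : ℕ} (hn : 0 < n) (hu : 0 < u)
    (hy : y = 2 * ((u : ℝ) + s) / n) (hy₁ : y ≤ 1) (hyε : y ^ ε ≤ Real.exp (-3))
    (hN : s + ε * (u + s) ≤ N) :
    y ^ N ≤ Real.exp (-u) * Real.exp (-1) ^ s * (s.factorial / (n : ℝ) ^ s) := by
  have hy₀ : 0 < y := by rw [hy]; positivity
  have hsmall : (y ^ ε) ^ ((u : ℝ) + s) ≤ Real.exp (-3 * (u + s)) := by
    rw [Real.exp_mul]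
    gcongr
  have hfactorial : y ^ s ≤ Real.exp (2 * (u + s)) * (s.factorial / (n : ℝ) ^ s) := by
    have := Real.pow_div_factorial_le_exp (x := 2 * ((u : ℝ) + s)) (by positivity) s
    rw [div_le_iff₀ (by positivity)] at this
    rw [hy, div_pow, ← mul_div_assoc]
    gcongr
  calc y ^ N = y ^ (N : ℝ) := (Real.rpow_natCast y N).symm
    _ ≤ y ^ (s + ε * (u + s)) := Real.rpow_le_rpow_of_exponent_ge hy₀ hy₁ hN
    _ = (y ^ ε) ^ ((u : ℝ) + s) * y ^ s := by
        rw [Real.rpow_add hy₀, Real.rpow_natCast, Real.rpow_mul hy₀.le, mul_comm]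
    _ ≤ Real.exp (-3 * (u + s)) * (Real.exp (2 * (u + s)) * (s.factorial / (n : ℝ) ^ s)) := by
        gcongr
    _ = Real.exp (-u) * Real.exp (-1) ^ s * (s.factorial / (n : ℝ) ^ s) := by
        rw [← mul_assoc, ← Real.exp_add, ← Real.exp_nat_mul, ← Real.exp_add]
        congr 2
        ring

lemma sum_exp_neg_one_pow_le_two (N : ℕ) : ∑ s ∈ range N, Real.exp (-1) ^ s ≤ 2 := by
  refine le_trans (Finset.sum_le_sum fun s _ => ?_) (sum_geometric_two_le N)
  gcongr
  rw [Real.exp_neg, inv_eq_one_div]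
  gcongr
  linarith [Real.add_one_le_exp (1 : ℝ)]

end Estimates

section RandomClosure

variable {n m k t : ℕ} {μ : ℝ}

lemma neg_log_mul_le_one_sub {x : ℝ} (hx : 0 < x) : -Real.log x * x ≤ 1 - x := by
  have := mul_le_mul_of_nonneg_right (Real.one_sub_inv_le_log_of_pos hx) hx.le
  rw [sub_mul, inv_mul_cancel₀ hx.ne'] at this
  linarith

/-- Exponential rate of the comparison between the random ensemble and its thinning with retention
probability `x`, where `ε` is the slack of all estimates. -/
def tiltRate (k t : ℕ) (μ x ε : ℝ) : ℝ :=
  Real.log x * (k.choose t * muc k (t + 1) + ε)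
    + (1 - x) * (1 - ε) * ((1 - ε) ^ 2 * k.choose t * μ)

/-- Constants for comparing the closure in the random ensemble with that in the thinned ensemble:
constraints are kept with probability `x`, closures with fewer than `δ * n` elements are excluded,
`ε` is the slack of all estimates and `c` the resulting exponential rate. -/
structure TiltParameters (k t : ℕ) (μ : ℝ) where
  x : ℝ
  ε : ℝ
  δ : ℝ
  c : ℝ
  x_pos : 0 < x
  x_lt_one : x < 1
  ε_pos : 0 < ε
  ε_lt_one : ε < 1
  δ_pos : 0 < δ
  mul_δ_le : 2 * k * δ ≤ ε
  two_mul_δ_le : 2 * δ ≤ ε * μ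
  two_mul_δ_rpow_le : (2 * δ) ^ ε ≤ Real.exp (-3)
  c_pos : 0 < c
  c_le_one : c ≤ 1
  c_le_tiltRate : c ≤ tiltRate k t μ x ε

lemma tiltRate_zero_pos (htk : t ≤ k) (hμ : 0 < μ) {x : ℝ} (hx₀ : 0 < x) (hx₁ : x < 1)
    (hx : muc k (t + 1) < x * μ) : 0 < tiltRate k t μ x 0 := by
  have hchoose : (0 : ℝ) < k.choose t := by exact_mod_cast Nat.choose_pos htk
  have hlog : 0 < -Real.log x := neg_pos.2 (Real.log_neg hx₀ hx₁)
  calc 0 ≤ k.choose t * μ * (1 - x - -Real.log x * x) :=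
        mul_nonneg (by positivity) (sub_nonneg.2 (neg_log_mul_le_one_sub hx₀))
    _ = k.choose t * ((1 - x) * μ - -Real.log x * (x * μ)) := by ring
    _ < k.choose t * ((1 - x) * μ - -Real.log x * muc k (t + 1)) := by gcongr
    _ = tiltRate k t μ x 0 := by rw [tiltRate]; ring

lemma nonempty_tiltParameters (ht : 1 ≤ t) (htk : t < k) (hμ : muc k (t + 1) < μ) :
    Nonempty (TiltParameters k t μ) := by
  have hμc := muc_pos ht htk
  have hμ₀ : 0 < μ := hμc.trans hμ
  obtain ⟨x, hx, hx₁⟩ := exists_between ((div_lt_one hμ₀).2 hμ)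
  have hx₀ : 0 < x := (div_pos hμc hμ₀).trans hx
  have hrate : ∀ᶠ ε in nhdsWithin (0 : ℝ) (Set.Ioi 0), 0 < tiltRate k t μ x ε := by
    have hcont : Continuous (tiltRate k t μ x) := by unfold tiltRate; fun_prop
    exact (hcont.continuousAt.eventually_const_lt (tiltRate_zero_pos htk.le hμ₀ hx₀ hx₁
      ((div_lt_iff₀ hμ₀).1 hx))).filter_mono nhdsWithin_le_nhds
  obtain ⟨ε, hεrate, hε⟩ := (hrate.and (Ioo_mem_nhdsGT one_pos)).exists
  have hδ_small : ∀ᶠ δ in nhds (0 : ℝ),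
      2 * k * δ < ε ∧ 2 * δ < ε * μ ∧ (2 * δ) ^ ε < Real.exp (-3) := by
    have hrpow : ContinuousAt (fun δ : ℝ => (2 * δ) ^ ε) 0 :=
      (by fun_prop : ContinuousAt (fun δ : ℝ => 2 * δ) 0).rpow_const (Or.inr hε.1.le)
    have hlin (a : ℝ) : Tendsto (fun δ : ℝ => a * δ) (nhds 0) (nhds 0) := by
      simpa using (continuous_const_mul a).tendsto 0
    exact ((hlin _).eventually_lt_const hε.1).and (((hlin _).eventually_lt_const
      (mul_pos hε.1 hμ₀)).and (hrpow.eventually_lt_const (by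
        simp [Real.zero_rpow hε.1.ne', Real.exp_pos])))
  obtain ⟨δ, ⟨hδk, hδμ, hδε⟩, hδ⟩ :=
    ((hδ_small.filter_mono nhdsWithin_le_nhds).and (self_mem_nhdsWithin (s := Set.Ioi 0))).exists
  exact ⟨⟨x, ε, δ, min 1 (tiltRate k t μ x ε), hx₀, hx₁, hε.1, hε.2, hδ, hδk.le, hδμ.le, hδε.le,
    lt_min one_pos hεrate, min_le_left _ _, min_le_right _ _⟩⟩

namespace TiltParameters

variable (P : TiltParameters k t μ) {U W : Finset (Fin n)}

/-- The sizes `n` (variables), `m` (constraints), `u` (determined variables) are large enough for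
the estimates with the constants `P`. -/
structure IsLarge (n m u : ℕ) : Prop where
  pos : 0 < u
  sq_le : (t : ℝ) ^ 2 ≤ P.ε * u
  le_δ_mul : (k : ℝ) ≤ P.δ * n
  le_card : μ * (n : ℝ) ^ t / (u : ℝ) ^ (t - 1) ≤ m

/-- Number of constraints inside a closure of size `w` that separates the two cases of the argument;
`(w - u) / (k - t)` is the least number that can determine `w - u` further variables. -/
def threshold (u w : ℕ) : ℕ := ⌊((w : ℝ) - u) / (k - t : ℕ) + P.ε * w⌋₊

lemma four_mul_δ_le_one (hk : 2 ≤ k) : 4 * P.δ ≤ 1 := by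
  have hk' : (2 : ℝ) ≤ k := by exact_mod_cast hk
  nlinarith [P.mul_δ_le, P.ε_lt_one, P.δ_pos]

variable {P}

lemma IsLarge.le {u : ℕ} (h : P.IsLarge n m u) (hk : 2 ≤ k) : k ≤ n := by
  have : (k : ℝ) ≤ n := h.le_δ_mul.trans
    (mul_le_of_le_one_left (Nat.cast_nonneg n) (by linarith [P.four_mul_δ_le_one hk, P.δ_pos]))
  exact_mod_cast this

lemma two_mul_card_add_le (hk : 2 ≤ k) (h : P.IsLarge n m #U) (hW : (#W : ℝ) < P.δ * n) :
    2 * (#W + k) ≤ n := by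
  have : 2 * ((#W : ℝ) + k) ≤ n :=
    calc 2 * ((#W : ℝ) + k) ≤ 2 * (P.δ * n + P.δ * n) := by
          gcongr
          exact h.le_δ_mul
      _ = 4 * P.δ * n := by ring
      _ ≤ n := mul_le_of_le_one_left (Nat.cast_nonneg n) (P.four_mul_δ_le_one hk)
  exact_mod_cast this

lemma card_le_pow_div_pow (ht : 1 ≤ t) (hU : 0 < #U) (hUW : U ⊆ W) :
    (#W : ℝ) ≤ (#W : ℝ) ^ t / (#U : ℝ) ^ (t - 1) := by
  rw [le_div_iff₀ (by positivity)]
  calc (#W : ℝ) * (#U : ℝ) ^ (t - 1) ≤ #W * (#W : ℝ) ^ (t - 1) := by gcongr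
    _ = (#W : ℝ) ^ t := mul_pow_sub_one (by omega) _

lemma threshold_le (ht : 1 ≤ t) (htk : t < k) (hU : 0 < #U) (hUW : U ⊆ W) :
    (P.threshold #U #W : ℝ)
      ≤ (k.choose t * muc k (t + 1) + P.ε) * ((#W : ℝ) ^ t / (#U : ℝ) ^ (t - 1)) := by
  have hcard : (#U : ℝ) ≤ #W := by exact_mod_cast Finset.card_le_card hUW
  refine (Nat.floor_le (add_nonneg (div_nonneg (sub_nonneg.2 hcard) (Nat.cast_nonneg _))
    (mul_nonneg P.ε_pos.le (Nat.cast_nonneg _)))).trans ?_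
  rw [add_mul]
  exact add_le_add (sub_div_le_choose_mul_muc_mul ht htk (by exact_mod_cast hU) (by positivity))
    (mul_le_mul_of_nonneg_left (card_le_pow_div_pow ht hU hUW) P.ε_pos.le)

lemma threshold_le_mul (ht : 1 ≤ t) (htk : t < k) (hμ : 0 < μ) (h : P.IsLarge n m #U)
    (hUW : U ⊆ W) (hW : (#W : ℝ) < P.δ * n) : (P.threshold #U #W : ℝ) ≤ P.ε * m := by
  have hU : 0 < #U := h.pos
  have hcard : (#U : ℝ) ≤ #W := by exact_mod_cast Finset.card_le_card hUW
  have hsub : 0 ≤ (#W : ℝ) - #U := sub_nonneg.2 hcard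
  have hd : (1 : ℝ) ≤ (k - t : ℕ) := by exact_mod_cast Nat.sub_pos_of_lt htk
  have hm : μ * n ≤ m := by
    have hn := card_le_pow_div_pow ht hU (Finset.subset_univ U)
    rw [Finset.card_univ, Fintype.card_fin] at hn
    refine le_trans ?_ h.le_card
    rw [mul_div_assoc]
    gcongr
  calc (P.threshold #U #W : ℝ) ≤ ((#W : ℝ) - #U) / (k - t : ℕ) + P.ε * #W :=
        Nat.floor_le (add_nonneg (div_nonneg hsub (Nat.cast_nonneg _))
          (mul_nonneg P.ε_pos.le (Nat.cast_nonneg _)))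
    _ ≤ #W + 1 * #W := by
        gcongr
        · exact (div_le_self hsub hd).trans (sub_le_self _ (Nat.cast_nonneg _))
        · exact P.ε_lt_one.le
    _ ≤ 2 * P.δ * n := by linarith
    _ ≤ P.ε * μ * n := mul_le_mul_of_nonneg_right P.two_mul_δ_le (Nat.cast_nonneg n)
    _ ≤ P.ε * m := by
        rw [mul_assoc]
        exact mul_le_mul_of_nonneg_left hm P.ε_pos.le

lemma le_outgoingWeight (ht : 1 ≤ t) (htk : t < k) (h : P.IsLarge n m #U)
    (hUW : U ⊆ W) (hW : (#W : ℝ) < P.δ * n) :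
    (1 - P.ε) ^ 2 * k.choose t * ((#W : ℝ) / n) ^ t ≤ outgoingWeight t W (edgeWeight n k) := by
  have hcard := Finset.card_le_card hUW
  have hU : 0 < #U := h.pos
  have hn := two_mul_card_add_le (by omega) h hW
  have hsq : (t : ℝ) ^ 2 ≤ P.ε * #W := by
    refine h.sq_le.trans (mul_le_mul_of_nonneg_left (by exact_mod_cast hcard) P.ε_pos.le)
  have htW : t ≤ #W := by
    have : (t : ℝ) ^ 2 ≤ #W :=
      hsq.trans (mul_le_of_le_one_left (Nat.cast_nonneg _) P.ε_lt_one.le)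
    exact (Nat.le_self_pow two_ne_zero t).trans (by exact_mod_cast this)
  refine one_sub_sq_mul_le_outgoingWeight htk (by omega) P.ε_lt_one.le
    (Finset.card_pos.1 (hU.trans_le hcard)) htW hsq (by omega) ?_
  have hkt : ((k - t : ℕ) : ℝ) ≤ k := by exact_mod_cast Nat.sub_le k t
  calc ((k - t : ℕ) : ℝ) * (#W + (k - t : ℕ)) ≤ k * (P.δ * n + P.δ * n) := by
        gcongr
        exact hkt.trans h.le_δ_mul
    _ = 2 * k * P.δ * n := by ring
    _ ≤ P.ε * n := by
        gcongr
        exact P.mul_δ_le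

lemma tiltFactor_le (ht : 1 ≤ t) (htk : t < k) (hμ : 0 < μ) (h : P.IsLarge n m #U)
    (hUW : U ⊆ W) (hW : (#W : ℝ) < P.δ * n) :
    tiltFactor P.x m (P.threshold #U #W) (outgoingWeight t W (edgeWeight n k))
      ≤ Real.exp (-P.c * #U) := by
  have hU : 0 < #U := h.pos
  have hn : (0 : ℝ) < n := by
    exact_mod_cast (by have := two_mul_card_add_le (by omega) h hW; omega : 0 < n)
  have hgrowth : (1 - P.ε) ^ 2 * k.choose t * μ * ((#W : ℝ) ^ t / (#U : ℝ) ^ (t - 1))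
      ≤ outgoingWeight t W (edgeWeight n k) * m :=
    calc (1 - P.ε) ^ 2 * k.choose t * μ * ((#W : ℝ) ^ t / (#U : ℝ) ^ (t - 1))
        = (1 - P.ε) ^ 2 * k.choose t * ((#W : ℝ) / n) ^ t
            * (μ * (n : ℝ) ^ t / (#U : ℝ) ^ (t - 1)) := by
          rw [div_pow]
          field_simp
      _ ≤ outgoingWeight t W (edgeWeight n k) * m :=
          mul_le_mul (le_outgoingWeight ht htk h hUW hW) h.le_card (by positivity)
            (outgoingWeight_nonneg edgeWeight_nonneg)
  refine (tiltFactor_le_exp P.x_pos P.x_lt_one.le P.ε_lt_one.le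
    (outgoingWeight_nonneg edgeWeight_nonneg) (by positivity) (threshold_le ht htk hU hUW)
    (threshold_le_mul ht htk hμ h hUW hW) hgrowth P.c_le_tiltRate).trans ?_
  have hcard : (#U : ℝ) ≤ #W := by exact_mod_cast Finset.card_le_card hUW
  rw [Real.exp_le_exp, neg_mul, neg_mul, neg_le_neg_iff]
  exact mul_le_mul_of_nonneg_left (hcard.trans (card_le_pow_div_pow ht hU hUW)) P.c_pos.le

lemma pow_threshold_le (ht : 1 ≤ t) (htk : t < k) (h : P.IsLarge n m #U) (hUW : U ⊆ W)
    (hW : (#W : ℝ) < P.δ * n) :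
    ((2 * (#W : ℝ) / n) ^ (k - t)) ^ (P.threshold #U #W + 1)
      ≤ Real.exp (-#U) * Real.exp (-1) ^ #(W \ U)
          * ((#(W \ U)).factorial / (n : ℝ) ^ #(W \ U)) := by
  have hcard : (#W : ℝ) = #U + #(W \ U) := by
    exact_mod_cast (Finset.card_sdiff_add_card_eq_card hUW).symm.trans (add_comm _ _)
  have hn : (0 : ℝ) < n := pos_of_mul_pos_right (hW.trans_le' (Nat.cast_nonneg _)) P.δ_pos.le
  have hd : (1 : ℝ) ≤ (k - t : ℕ) := by exact_mod_cast Nat.sub_pos_of_lt htk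
  have hratio : 2 * (#W : ℝ) / n ≤ 2 * P.δ := by
    rw [div_le_iff₀ hn]
    linarith
  have hδ : 2 * P.δ ≤ 1 := by linarith [P.four_mul_δ_le_one (by omega), P.δ_pos]
  rw [← pow_mul]
  refine pow_le_exp_mul_exp_pow_mul (by exact_mod_cast hn) h.pos (by rw [hcard])
    (hratio.trans hδ) ((Real.rpow_le_rpow (by positivity) hratio P.ε_pos.le).trans
      P.two_mul_δ_rpow_le) ?_
  rw [← hcard]
  calc (#(W \ U) : ℝ) + P.ε * #W
      ≤ (k - t : ℕ) * (((#W : ℝ) - #U) / (k - t : ℕ) + P.ε * #W) := by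
        rw [mul_add, mul_div_cancel₀ _ (one_pos.trans_le hd).ne',
          sub_eq_of_eq_add' hcard]
        exact add_le_add le_rfl
          (le_mul_of_one_le_left (mul_nonneg P.ε_pos.le (Nat.cast_nonneg _)) hd)
    _ ≤ (k - t : ℕ) * ((P.threshold #U #W : ℝ) + 1) :=
        mul_le_mul_of_nonneg_left (Nat.lt_floor_add_one _).le (Nat.cast_nonneg _)
    _ = ((k - t) * (P.threshold #U #W + 1) : ℕ) := by push_cast; ring

lemma mass_pow_threshold_le (ht : 1 ≤ t) (htk : t < k) (hn : 0 < n) (h : P.IsLarge n m #U) :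
    mass (fun W => ((2 * (#W : ℝ) / n) ^ (k - t)) ^ (P.threshold #U #W + 1))
      (fun W => U ⊆ W ∧ (#W : ℝ) < P.δ * n) ≤ 2 * Real.exp (-#U) := by
  let g : ℕ → ℝ := fun s =>
    Real.exp (-#U) * Real.exp (-1) ^ s * (s.factorial / (n : ℝ) ^ s)
  have hchoose (s : ℕ) : (n.choose s : ℝ) * g s ≤ Real.exp (-#U) * Real.exp (-1) ^ s :=
    calc (n.choose s : ℝ) * g s ≤ (n : ℝ) ^ s / s.factorial * g s := by
          gcongr
          exact Nat.choose_le_pow_div s n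
      _ = Real.exp (-#U) * Real.exp (-1) ^ s := by
          simp only [g]
          field_simp
  calc mass (fun W => ((2 * (#W : ℝ) / n) ^ (k - t)) ^ (P.threshold #U #W + 1))
        (fun W => U ⊆ W ∧ (#W : ℝ) < P.δ * n)
      ≤ mass (fun W => g #(W \ U)) (fun W => U ⊆ W ∧ (#W : ℝ) < P.δ * n) :=
        mass_le_mass_of_le fun W hW => pow_threshold_le ht htk h hW.1 hW.2
    _ ≤ mass (fun W => g #(W \ U)) (U ⊆ ·) :=
        mass_mono (fun W => by positivity) fun W hW => hW.1
    _ ≤ ∑ s ∈ range (n + 1), (n.choose s : ℝ) * g s := by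
        simpa only [Fintype.card_fin] using mass_superset_le (g := g) (fun s => by positivity) U
    _ ≤ ∑ s ∈ range (n + 1), Real.exp (-#U) * Real.exp (-1) ^ s :=
        Finset.sum_le_sum fun s _ => hchoose s
    _ ≤ 2 * Real.exp (-#U) := by
        rw [← Finset.mul_sum, mul_comm]
        gcongr
        exact sum_exp_neg_one_pow_le_two _

lemma prG_card_propagationClosure_lt_le (ht : 1 ≤ t) (htk : t < k) (hμ : 0 < μ)
    (h : P.IsLarge n m #U) :
    prG n m k (fun ω => (#(propagationClosure t (nbhd ω) U) : ℝ) < P.δ * n)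
      ≤ 3 * Real.exp (-P.c * #U) := by
  have hkn : k ≤ n := h.le (by omega)
  have hn : 0 < n := by omega
  have hU : 0 < #U := h.pos
  have hW_pos (W : Finset (Fin n)) (hUW : U ⊆ W) : (0 : ℝ) < #W := by
    exact_mod_cast hU.trans_le (Finset.card_le_card hUW)
  have hW_le (W : Finset (Fin n)) (hW : (#W : ℝ) < P.δ * n) : 2 * (#W : ℝ) / n ≤ 1 := by
    rw [div_le_one (by positivity)]
    exact_mod_cast (by have := two_mul_card_add_le (by omega) h hW; omega : 2 * #W ≤ n)
  rw [prG_nbhd fun σ => (#(propagationClosure t σ U) : ℝ) < P.δ * n]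
  calc mass (piWeight (edgeWeight n k))
        (fun σ : Fin m → Finset (Fin n) => (#(propagationClosure t σ U) : ℝ) < P.δ * n)
      ≤ Real.exp (-P.c * #U)
        + mass (fun W => ((2 * (#W : ℝ) / n) ^ (k - t)) ^ (P.threshold #U #W + 1))
            (fun W => U ⊆ W ∧ (#W : ℝ) < P.δ * n) := by
        refine mass_propagationClosure_le edgeWeight_nonneg (sum_edgeWeight hkn) P.x_pos
          P.x_lt_one.le (fun W => (#W : ℝ) < P.δ * n) _ (fun W => (2 * (#W : ℝ) / n) ^ (k - t))
          (fun W hUW _ => ?_) (fun W _ hW => pow_le_one₀ (by positivity) (hW_le W hW))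
          (fun W _ hW => mass_edgeWeight_subset_le_mul_outgoingWeight htk
            (two_mul_card_add_le (by omega) h hW)) (Real.exp_pos _).le fun W hUW hW => ?_
        · have := hW_pos W hUW
          positivity
        · rw [Fintype.card_fin]
          exact tiltFactor_le ht htk hμ h hUW hW
    _ ≤ Real.exp (-P.c * #U) + 2 * Real.exp (-#U) := by
        gcongr
        exact mass_pow_threshold_le ht htk hn h
    _ ≤ Real.exp (-P.c * #U) + 2 * Real.exp (-P.c * #U) := by
        gcongr
        rw [neg_mul]
        exact neg_le_neg (mul_le_of_le_one_left (Nat.cast_nonneg _) P.c_le_one)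
    _ = 3 * Real.exp (-P.c * #U) := by ring

lemma eventually_isLarge {u m : ℕ → ℕ} (hu : Tendsto u atTop atTop)
    (hm : ∀ n : ℕ, μ * (n : ℝ) ^ t / (u n : ℝ) ^ (t - 1) ≤ m n) :
    ∀ᶠ n in atTop, P.IsLarge n (m n) (u n) := by
  have hu' : Tendsto (fun n => P.ε * (u n : ℝ)) atTop atTop :=
    (tendsto_natCast_atTop_atTop.comp hu).const_mul_atTop P.ε_pos
  have hn : Tendsto (fun n : ℕ => P.δ * (n : ℝ)) atTop atTop :=
    tendsto_natCast_atTop_atTop.const_mul_atTop P.δ_pos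
  filter_upwards [hu.eventually_gt_atTop 0, hu'.eventually_ge_atTop ((t : ℝ) ^ 2),
    hn.eventually_ge_atTop (k : ℝ)] with n hn₁ hn₂ hn₃
  exact ⟨hn₁, hn₂, hn₃, hm n⟩

end TiltParameters

lemma eventually_three_mul_exp_le {u : ℕ → ℕ} (hu : Tendsto u atTop atTop) {c : ℝ} (hc : 0 < c) :
    ∀ᶠ n in atTop, 3 * Real.exp (-c * u n) ≤ Real.exp (-(c / 2) * u n) := by
  have hlarge : Tendsto (fun n => c / 2 * (u n : ℝ)) atTop atTop :=
    (tendsto_natCast_atTop_atTop.comp hu).const_mul_atTop (half_pos hc)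
  filter_upwards [hlarge.eventually_ge_atTop 2] with n hn
  calc 3 * Real.exp (-c * u n) ≤ Real.exp 2 * Real.exp (-c * u n) := by
        gcongr
        linarith [Real.add_one_le_exp (2 : ℝ)]
    _ ≤ Real.exp (-(c / 2) * u n) := by
        rw [← Real.exp_add, Real.exp_le_exp]
        linarith

theorem exists_eventually_prG_card_propagationClosure_lt_le (ht : 1 ≤ t) (htk : t < k)
    (hμ : muc k (t + 1) < μ) {u m : ℕ → ℕ} (hu : Tendsto u atTop atTop)
    (hm : ∀ n : ℕ, μ * (n : ℝ) ^ t / (u n : ℝ) ^ (t - 1) ≤ m n) :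
    ∃ δ ∈ Set.Ioo (0 : ℝ) 1, ∃ c > (0 : ℝ), ∀ᶠ n in atTop, ∀ U : Finset (Fin n), #U = u n →
      prG n (m n) k (fun ω => (#(propagationClosure t (nbhd ω) U) : ℝ) < δ * n)
        ≤ Real.exp (-c * u n) := by
  obtain ⟨P⟩ := nonempty_tiltParameters ht htk hμ
  refine ⟨P.δ, ⟨P.δ_pos, by linarith [P.four_mul_δ_le_one (by omega), P.δ_pos]⟩, P.c / 2,
    half_pos P.c_pos, ?_⟩
  filter_upwards [P.eventually_isLarge hu hm, eventually_three_mul_exp_le hu P.c_pos]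
    with n hlarge hexp U hU
  rw [← hU] at hlarge hexp ⊢
  exact (TiltParameters.prG_card_propagationClosure_lt_le ht htk ((muc_pos ht htk).trans hμ)
    hlarge).trans hexp

end RandomClosure

section LocalPolytope

variable {n m k q l t : ℕ} {ω : Fin m → (Fin k ↪ Fin n)} {b : Fin n → Fin q → ℝ}
  {B : Fin m → (Fin k → Fin q) → ℝ} {f : Fin m → (Fin k → Fin q) → (Fin l → Fin q)}
  {y : Fin m → Fin l → Fin q} {a : Fin m}

lemma card_add_hammingDist_le {κ A : Type*} [Fintype κ] [DecidableEq A] {T : Finset κ}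
    {z z' : κ → A} (h : ∀ j ∈ T, z j = z' j) : #T + hammingDist z z' ≤ Fintype.card κ := by
  classical
  have hdisj : Disjoint T (univ.filter fun j => z j ≠ z' j) :=
    Finset.disjoint_left.2 fun j hj hne => (Finset.mem_filter.1 hne).2 (h j hj)
  exact (Finset.card_union_of_disjoint hdisj).symm.trans_le (Finset.card_le_univ _)

lemma HasMDSInv.pairwise {r : ℕ} {f : (Fin k → Fin q) → (Fin (k - r + 1) → Fin q)}
    (hf : HasMDSInv q k r f) (y : Fin (k - r + 1) → Fin q) :
    {z | f z = y}.Pairwise fun z z' => k - r + 2 ≤ hammingDist z z' := fun z hz z' hz' hne => by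
  rw [← (hf y).2]
  exact Nat.sInf_le ⟨z, Finset.mem_filter.2 ⟨Finset.mem_univ z, hz⟩, z',
    Finset.mem_filter.2 ⟨Finset.mem_univ z', hz'⟩, hne, rfl⟩

lemma mem_integralPart {i : Fin n} : i ∈ integralPart b ↔ ∃ x, b i x = 1 := by
  simp [integralPart]

lemma card_nbhd_inter (W : Finset (Fin n)) :
    #(nbhd ω a ∩ W) = #{j | ω a j ∈ W} := by
  rw [nbhd, ← Finset.filter_mem_eq_inter, Finset.filter_image,
    Finset.card_image_of_injective _ (ω a).injective]

namespace MemLOCAL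

lemma exists_ne_zero (h : MemLOCAL ω b B) (a : Fin m) : ∃ z, B a z ≠ 0 := by
  by_contra! hzero
  simpa [hzero] using h.2.2.2.1 a

lemma apply_eq_one_iff (h : MemLOCAL ω b B) {j : Fin k} {x : Fin q} :
    b (ω a j) x = 1 ↔ ∀ z, B a z ≠ 0 → z j = x := by
  obtain ⟨-, -, hB_nonneg, hB_sum, hmarginal⟩ := h
  have hle (z : Fin k → Fin q) : (if z j = x then B a z else 0) ≤ B a z := by
    split_ifs
    exacts [le_rfl, hB_nonneg a z]
  rw [hmarginal, ← hB_sum a, Finset.sum_eq_sum_iff_of_le fun z _ => hle z]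
  refine ⟨fun heq z hz => by_contra fun hne => hz ?_, fun hsupp z _ => ?_⟩
  · simpa [hne] using (heq z (Finset.mem_univ z)).symm
  · by_cases hz : B a z = 0
    · simp [hz]
    · rw [if_pos (hsupp z hz)]

-- Configurations in the support of `B a` agree on the integral part, so by the distance assumption
-- there is only one of them once `t` variables of the constraint are integral.
lemma isPropagationClosed_integralPart (h : MemLOCAL ω b B) (hB : ZeroOptimal f y B)
    (hdist : ∀ a, {z | f a z = y a}.Pairwise fun z z' => k < t + hammingDist z z') :
    IsPropagationClosed t (nbhd ω) (integralPart b) := by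
  intro a ht i hi
  rw [card_nbhd_inter] at ht
  have hsingle {z z' : Fin k → Fin q} (hz : B a z ≠ 0) (hz' : B a z' ≠ 0) : z = z' := by
    by_contra hne
    have hagree : ∀ j ∈ ({j | ω a j ∈ integralPart b} : Finset (Fin k)), z j = z' j := by
      intro j hj
      obtain ⟨x, hx⟩ := mem_integralPart.1 (Finset.mem_filter.1 hj).2
      rw [h.apply_eq_one_iff] at hx
      rw [hx z hz, hx z' hz']
    have hle := card_add_hammingDist_le hagree
    have hlt := hdist a (hB a z hz) (hB a z' hz') hne
    rw [Fintype.card_fin] at hle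
    omega
  obtain ⟨z, hz⟩ := h.exists_ne_zero a
  obtain ⟨j, -, rfl⟩ := Finset.mem_image.1 hi
  exact mem_integralPart.2 ⟨z j, h.apply_eq_one_iff.2 fun z' hz' => by rw [hsingle hz' hz]⟩

end MemLOCAL

end LocalPolytope

lemma UGood.eventually_card_filter_lt {u : ℕ → ℕ} (hu : UGood u) :
    ∀ᶠ n in atTop, #{i : Fin n | (i : ℕ) < u n} = u n := by
  filter_upwards [hu.2.eventually_le_const one_pos, eventually_gt_atTop 0] with n hun hn
  have hle : u n ≤ n := by exact_mod_cast (div_le_one₀ (Nat.cast_pos.2 hn)).1 hun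
  rw [Fin.card_filter_val_lt, min_eq_right hle]

theorem stmt1_general {k r : ℕ} (hr : 2 ≤ r) (hrk : r ≤ k) {u : ℕ → ℕ}
    (hu : Tendsto u atTop atTop) {μ : ℝ} (hμ : muc k r < μ) {m : ℕ → ℕ}
    (hm : ∀ n : ℕ, μ * (n : ℝ) ^ (r - 1) / (u n : ℝ) ^ (r - 2) ≤ m n) :
    ∃ α ∈ Set.Ioo (0 : ℝ) 1, ∃ c > (0 : ℝ), ∀ᶠ n in atTop, ∀ U : Finset (Fin n), #U = u n →
      1 - Real.exp (-c * u n) ≤ prG n (m n) k (fun ω : Fin (m n) → (Fin k ↪ Fin n) =>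
        ∀ (q l : ℕ) (f : Fin (m n) → (Fin k → Fin q) → (Fin l → Fin q))
          (y : Fin (m n) → Fin l → Fin q) (b : Fin n → Fin q → ℝ)
          (B : Fin (m n) → (Fin k → Fin q) → ℝ),
          (∀ a, {z | f a z = y a}.Pairwise fun z z' => k - r + 2 ≤ hammingDist z z') →
          MemLOCAL ω b B → U ⊆ integralPart b → ZeroOptimal f y B →
          (1 - α) * n ≤ #(integralPart b)) := by
  obtain ⟨t, rfl⟩ : ∃ t, r = t + 1 := ⟨r - 1, by omega⟩
  obtain ⟨δ, hδ, c, hc, hclosure⟩ :=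
    exists_eventually_prG_card_propagationClosure_lt_le (by omega) hrk hμ hu hm
  refine ⟨1 - δ, ⟨sub_pos.2 hδ.2, sub_lt_self _ hδ.1⟩, c, hc, ?_⟩
  filter_upwards [hclosure, eventually_ge_atTop k] with n hclosure hkn U hU
  refine (sub_le_sub_left (hclosure U hU) 1).trans (one_sub_prG_le hkn fun ω => ?_)
  refine or_iff_not_imp_right.2 fun hlarge q l f y b B hdist hLOCAL hU hB => ?_
  have hclosed := hLOCAL.isPropagationClosed_integralPart hB (t := t) fun a z hz z' hz' hne => by
    have := hdist a hz hz' hne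
    omega
  calc (1 - (1 - δ)) * n = δ * n := by rw [sub_sub_cancel]
    _ ≤ #(propagationClosure t (nbhd ω) U) := not_lt.1 hlarge
    _ ≤ #(integralPart b) := by
        exact_mod_cast Finset.card_le_card (propagationClosure_subset hU hclosed)

/-- Theorem 2 / `thm:main1`: for local functions with MDS inverse image
of dimension `r-1` and `m = ⌈μ n^{r-1}/u(n)^{r-2}⌉` with `μ > μ_c(k,r)`, there are
`α ∈ (0,1)` and `c > 0` such that with probability `≥ 1 - exp(-c u(n))` every zero-optimal
point of LOCAL (with the first `u(n)` variables fixed to the planted values) has integral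
part of size at least `(1-α) n`. -/
theorem stmt1 (k r q : ℕ) (hr : 3 ≤ r) (hrk : r ≤ k) (hq : 2 ≤ q)
    (u : ℕ → ℕ) (hu : UGood u)
    (μ : ℝ) (hμ : muc k r < μ)
    (m : ℕ → ℕ) (hm : ∀ n, m n = ⌈μ * (n : ℝ) ^ (r - 1) / (u n : ℝ) ^ (r - 2)⌉₊)
    (f : (n : ℕ) → Fin (m n) → (Fin k → Fin q) → (Fin (k - r + 1) → Fin q))
    (hf : ∀ n a, HasMDSInv q k r (f n a))
    (xs : (n : ℕ) → Fin n → Fin q) :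
    ∃ α ∈ Set.Ioo (0 : ℝ) 1, ∃ c > (0 : ℝ), ∀ᶠ n in atTop,
      1 - Real.exp (-c * u n) ≤
        prG n (m n) k (fun ω : Fin (m n) → (Fin k ↪ Fin n) =>
          ∀ (b : Fin n → Fin q → ℝ) (B : Fin (m n) → (Fin k → Fin q) → ℝ),
            MemLOCAL ω b B →
            (∀ i : Fin n, (i : ℕ) < u n → b i (xs n i) = 1) →
            ZeroOptimal (f n) (fun a => f n a fun j => xs n (ω a j)) B →
            (1 - α) * n ≤ ((integralPart b).card : ℝ)) := by
  obtain ⟨α, hα, c, hc, h⟩ := stmt1_general (by omega) hrk (tendsto_natCast_atTop_iff.1 hu.1) hμ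
    fun n => (Nat.le_ceil _).trans_eq (congrArg Nat.cast (hm n).symm)
  refine ⟨α, hα, c, hc, ?_⟩
  filter_upwards [h, hu.eventually_card_filter_lt] with n h hU
  exact (h _ hU).trans (prG_mono fun ω hω b B hLOCAL hb hB =>
    hω q _ (f n) _ b B (fun a => (hf n a).pairwise _) hLOCAL
      (fun i hi => mem_integralPart.2 ⟨xs n i, hb i (Finset.mem_filter.1 hi).2⟩) hB)
end
end

section
/- Fix an integer k ≥ 2, a constant μ > 1/(k(k−1)), and u ∈ ω(1) ∩ o(n). Then there exist α ∈ (0,1) and c > 0 such that, for the random bipartite graph ensemble with n variables and m = ⌈μn⌉ constraints, the probability that there exists a k-stopping set of size at least αn contained in {u(n)+1,…,n} is at most exp(−c·u(n)) for all sufficiently large n. -/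
open Filter Finset Asymptotics

noncomputable section

/-!
A `k`-stopping set is a union of connected components of the random hypergraph, so its complement
is one too. A stopping set of size at least `(1 - ε) n` that avoids a set `B` of `u` vertices
therefore forces the components meeting `B` to have at most `ε n` vertices in total; call their
union `C`.

If `C` spans more than `θ |C|` hyperedges, where `θ > 1 / (k - 1)`, it is one of the exceptionally
dense small vertex sets that a union bound over all vertex sets excludes up to probability
`2 exp (-u)`.

If `C` spans at most `θ |C|` hyperedges, compare with the hypergraph in which every hyperedge is
kept only with probability `p = 1 / (μ k (k - 1))`, which makes it critical. The original
hypergraph being supercritical, each such outcome of exploring `C` is at least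
`exp (c |C|) ≥ exp (c u)` times likelier after thinning than before: thinning costs a factor `p`
for each of the few hyperedges inside `C`, but gains more from the many hyperedges that must avoid
`C`. The thinned probabilities of all outcomes sum to at most `1`, so this case has probability at
most `exp (-c u)`.
-/

section Exploration

variable {ι E α : Type*} (supp : E → Finset α)

/-- `U` is a union of connected components of the hypergraph with hyperedges `supp e`, for `e` in
the partial configuration `ω` (where `ω a = none` means that the hyperedge `a` is absent). -/
def IsSaturated (ω : ι → Option E) (U : Finset α) : Prop :=
  ∀ a, ∀ e ∈ ω a, supp e ⊆ U ∨ Disjoint (supp e) U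

variable {supp} {ω ω' : ι → Option E} {U : Finset α} in
lemma IsSaturated.mono (hle : ∀ a, ∀ e ∈ ω a, e ∈ ω' a) (h : IsSaturated supp ω' U) :
    IsSaturated supp ω U :=
  fun a e he => h a e (hle a e he)

variable [Fintype α]

variable {supp} {ω : ι → Option E} {U : Finset α} in
lemma IsSaturated.compl [DecidableEq α] (h : IsSaturated supp ω U) : IsSaturated supp ω Uᶜ :=
  fun a e he => (h a e he).symm.imp subset_compl_iff_disjoint_right.mpr
    disjoint_compl_right.mono_left

open Classical in
/-- The union of the connected components of the hypergraph `ω` that meet `B`, encoded as the least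
saturated set containing `B`. -/
def hull (B : Finset α) (ω : ι → Option E) : Finset α :=
  {v | ∀ U, B ⊆ U → IsSaturated supp ω U → v ∈ U}

/-- A configuration all of whose hyperedges lie in the components meeting `B`: the possible outcomes
of exploring a hypergraph from `B`. -/
def IsExplored (B : Finset α) (κ : ι → Option E) : Prop :=
  ∀ a, ∀ e ∈ κ a, supp e ⊆ hull supp B κ

variable {supp} {B U : Finset α} {ω ω' κ : ι → Option E}

lemma subset_hull : B ⊆ hull supp B ω := by
  intro v hv
  simp only [hull, mem_filter_univ]
  exact fun U hBU _ => hBU hv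

lemma hull_subset (hBU : B ⊆ U) (hU : IsSaturated supp ω U) : hull supp B ω ⊆ U := by
  intro v hv
  simp only [hull, mem_filter_univ] at hv
  exact hv U hBU hU

lemma isSaturated_hull : IsSaturated supp ω (hull supp B ω) := by
  intro a e he
  by_cases hdisj : Disjoint (supp e) (hull supp B ω)
  · exact Or.inr hdisj
  · obtain ⟨v, hve, hvB⟩ := not_disjoint_iff.mp hdisj
    refine Or.inl fun w hwe => ?_
    simp only [hull, mem_filter_univ]
    intro U hBU hU
    have hvU : v ∈ U := hull_subset hBU hU hvB
    exact (hU a e he).resolve_right (not_disjoint_iff.mpr ⟨v, hve, hvU⟩) hwe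

lemma hull_mono (hle : ∀ a, ∀ e ∈ ω a, e ∈ ω' a) : hull supp B ω ⊆ hull supp B ω' :=
  hull_subset subset_hull (isSaturated_hull.mono hle)

variable [DecidableEq α]

variable (supp) in
/-- The part of `ω` revealed by exploring the components that meet `B`. -/
def explored (B : Finset α) (ω : ι → Option E) : ι → Option E :=
  fun a => (ω a).filter fun e => supp e ⊆ hull supp B ω

lemma mem_explored {a : ι} {e : E} :
    e ∈ explored supp B ω a ↔ e ∈ ω a ∧ supp e ⊆ hull supp B ω := by
  simp only [explored, Option.mem_filter_iff, decide_eq_true_eq]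

lemma isSome_explored_some_comp {ω : ι → E} {a : ι} :
    (explored supp B (some ∘ ω) a).isSome ↔ supp (ω a) ⊆ hull supp B (some ∘ ω) := by
  simp [explored, Option.isSome_filter]

lemma hull_explored : hull supp B (explored supp B ω) = hull supp B ω := by
  have hle : hull supp B (explored supp B ω) ⊆ hull supp B ω :=
    hull_mono fun a e he => (mem_explored.mp he).1
  refine hle.antisymm (hull_subset subset_hull fun a e he => ?_)
  rcases isSaturated_hull (B := B) a e he with hsub | hdisj
  · exact isSaturated_hull a e (mem_explored.mpr ⟨he, hsub⟩)
  · exact Or.inr (hdisj.mono_right hle)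

lemma isExplored_explored : IsExplored supp B (explored supp B ω) := by
  intro a e he
  rw [hull_explored]
  exact (mem_explored.mp he).2

variable [Fintype E]

variable (supp) in
/-- The hyperedges that avoid the vertex set `C`; their density is the probability that a uniform
hyperedge stays outside the explored components. -/
def avoiding (C : Finset α) : Finset E :=
  {e | Disjoint (supp e) C}

variable (supp) in
/-- The values a configuration may take at a coordinate where its exploration shows `o` and has
vertex set `C`: an unrevealed hyperedge is absent or avoids `C`. -/
def completions (C : Finset α) : Option E → Finset (Option E)
  | none => insertNone (avoiding supp C)
  | some e => {some e}

lemma explored_eq_iff (hne : ∀ e, (supp e).Nonempty) (hκ : IsExplored supp B κ) :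
    explored supp B ω = κ ↔ ∀ a, ω a ∈ completions supp (hull supp B κ) (κ a) := by
  constructor
  · rintro rfl a
    rw [hull_explored]
    cases h : explored supp B ω a with
    | some e => exact mem_singleton.mpr (mem_explored.mp h).1
    | none =>
      refine mem_insertNone.mpr fun e he => mem_filter_univ _ |>.mpr ?_
      refine (isSaturated_hull a e he).resolve_left fun hsub => ?_
      exact Option.not_mem_none e (h ▸ mem_explored.mpr ⟨he, hsub⟩)
  · intro hω
    have hκω : ∀ a, ∀ e ∈ κ a, e ∈ ω a := by
      intro a e he
      have hωa := hω a
      rw [Option.mem_def.mp he] at hωa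
      exact mem_singleton.mp hωa
    have hmem : ∀ a, ∀ e ∈ ω a, e ∈ κ a ∨ Disjoint (supp e) (hull supp B κ) := by
      intro a e he
      have hωa := hω a
      cases h : κ a with
      | none =>
        rw [h] at hωa
        exact Or.inr (mem_filter_univ e |>.mp (mem_insertNone.mp hωa e he))
      | some e' => exact Or.inl (Option.mem_unique (hκω a e' h) he ▸ rfl)
    have hhull : hull supp B ω = hull supp B κ :=
      (hull_subset subset_hull fun a e he => (hmem a e he).imp_left (hκ a e)).antisymm
        (hull_mono hκω)
    funext a
    ext e
    rw [← Option.mem_def, ← Option.mem_def, mem_explored, hhull]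
    refine ⟨fun ⟨he, hsub⟩ => (hmem a e he).resolve_right fun hdisj => ?_,
      fun he => ⟨hκω a e he, hκ a e he⟩⟩
    exact (hne e).ne_empty (disjoint_self.mp (hdisj.mono_right hsub))

end Exploration

lemma dens_piFinset {ι : Type*} [Fintype ι] [DecidableEq ι] {β : ι → Type*} [∀ a, Fintype (β a)]
    (s : ∀ a, Finset (β a)) : dens (Fintype.piFinset s) = ∏ a, dens (s a) := by
  simp only [dens_eq_card_div_card, Fintype.card_piFinset, Fintype.card_pi, Nat.cast_prod,
    prod_div_distrib]

section Thinning

variable {ι E α : Type*} [Fintype E]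

/-- The law of one thinned hyperedge: absent with probability `1 - p`, otherwise uniform on `E`. -/
def thinnedWeight (p : ℝ) : Option E → ℝ
  | none => 1 - p
  | some _ => p / Fintype.card E

lemma thinnedWeight_nonneg {p : ℝ} (hp₀ : 0 ≤ p) (hp₁ : p ≤ 1) (o : Option E) :
    0 ≤ thinnedWeight p o := by
  cases o with
  | none => exact sub_nonneg.mpr hp₁
  | some e => exact div_nonneg hp₀ (Nat.cast_nonneg _)

lemma sum_thinnedWeight [Nonempty E] (p : ℝ) : ∑ o : Option E, thinnedWeight p o = 1 := by
  simp only [Fintype.sum_option, thinnedWeight, sum_const, card_univ, nsmul_eq_mul]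
  field_simp
  ring

lemma sum_prod_thinnedWeight [Fintype ι] [DecidableEq ι] [Nonempty E] (p : ℝ) :
    ∑ ω : ι → Option E, ∏ a, thinnedWeight p (ω a) = 1 := by
  rw [← Fintype.piFinset_univ, ← prod_univ_sum]
  simp only [sum_thinnedWeight, prod_const_one]

variable (supp : E → Finset α) [DecidableEq α]

lemma sum_completions_none (p : ℝ) (C : Finset α) :
    ∑ o ∈ completions supp C none, thinnedWeight p o =
      1 - p + p * (dens (avoiding supp C) : ℝ) := by
  simp only [completions, sum_insertNone, thinnedWeight, sum_const, nsmul_eq_mul, nnratCast_dens]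
  ring

variable {supp} [Fintype α] [Fintype ι] [DecidableEq ι]
  {B : Finset α} {κ : ι → Option E}

lemma sum_prod_thinnedWeight_explored_eq [DecidableEq E] (hne : ∀ e, (supp e).Nonempty)
    (hκ : IsExplored supp B κ) (p : ℝ) :
    ∑ ω with explored supp B ω = κ, ∏ a, thinnedWeight p (ω a) =
      (p / Fintype.card E) ^ #{a | (κ a).isSome} *
        (1 - p + p * (dens (avoiding supp (hull supp B κ)) : ℝ)) ^ #{a | ¬(κ a).isSome} := by
  have hfiber : ({ω | explored supp B ω = κ} : Finset (ι → Option E)) =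
      Fintype.piFinset fun a => completions supp (hull supp B κ) (κ a) := by
    ext ω
    rw [mem_filter_univ, Fintype.mem_piFinset, explored_eq_iff hne hκ]
  rw [hfiber, ← prod_univ_sum, ← prod_const, ← prod_const, ← prod_ite]
  refine prod_congr rfl fun a _ => ?_
  cases κ a with
  | none => exact sum_completions_none supp p _
  | some e => exact sum_singleton _ _

lemma dens_explored_eq [DecidableEq E] (hne : ∀ e, (supp e).Nonempty) (hκ : IsExplored supp B κ) :
    (dens {ω : ι → E | explored supp B (some ∘ ω) = κ} : ℝ) =
      (Fintype.card E : ℝ)⁻¹ ^ #{a | (κ a).isSome} *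
        (dens (avoiding supp (hull supp B κ)) : ℝ) ^ #{a | ¬(κ a).isSome} := by
  have hfiber : ({ω | explored supp B (some ∘ ω) = κ} : Finset (ι → E)) =
      Fintype.piFinset fun a => eraseNone (completions supp (hull supp B κ) (κ a)) := by
    ext ω
    simp only [mem_filter_univ, Fintype.mem_piFinset, mem_eraseNone, explored_eq_iff hne hκ,
      Function.comp_apply]
  rw [hfiber, dens_piFinset, NNRat.cast_prod, ← prod_const, ← prod_const, ← prod_ite]
  refine prod_congr rfl fun a _ => ?_
  cases κ a with
  | none => simp [completions]
  | some e =>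
    have hsingleton : eraseNone {some e} = ({e} : Finset E) := eraseNone_map_some {e}
    simp [completions, hsingleton]

lemma dens_explored_le_of_thinned_le [Nonempty E] (hne : ∀ e, (supp e).Nonempty) {p R : ℝ}
    (hp₀ : 0 ≤ p) (hp₁ : p ≤ 1) (hR : 0 ≤ R) (Q : (ι → Option E) → Prop) [DecidablePred Q]
    (hQ : ∀ κ, IsExplored supp B κ → Q κ →
      (dens (avoiding supp (hull supp B κ)) : ℝ) ^ #{a | ¬(κ a).isSome} ≤
        R * (p ^ #{a | (κ a).isSome} *
          (1 - p + p * (dens (avoiding supp (hull supp B κ)) : ℝ)) ^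
            #{a | ¬(κ a).isSome})) :
    (dens {ω : ι → E | Q (explored supp B (some ∘ ω))} : ℝ) ≤ R := by
  classical
  set K : Finset (ι → Option E) := {κ | IsExplored supp B κ ∧ Q κ}
  set P : (ι → Option E) → ℝ := fun ω => ∏ a, thinnedWeight p (ω a)
  have hfiber : ∀ κ ∈ K, (dens {ω : ι → E | explored supp B (some ∘ ω) = κ} : ℝ) ≤
      R * ∑ ω with explored supp B ω = κ, P ω := by
    intro κ hκK
    obtain ⟨hκ, hQκ⟩ := mem_filter_univ κ |>.mp hκK
    rw [dens_explored_eq hne hκ, sum_prod_thinnedWeight_explored_eq hne hκ, div_eq_inv_mul, mul_pow]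
    calc _ ≤ _ := mul_le_mul_of_nonneg_left (hQ κ hκ hQκ) (by positivity)
      _ = _ := by ring
  have hcover : ({ω : ι → E | Q (explored supp B (some ∘ ω))} : Finset (ι → E)) ⊆
      K.biUnion fun κ => {ω | explored supp B (some ∘ ω) = κ} := by
    intro ω hω
    rw [mem_filter_univ] at hω
    simp only [K, mem_biUnion, mem_filter_univ]
    exact ⟨_, ⟨isExplored_explored, hω⟩, rfl⟩
  calc (dens {ω : ι → E | Q (explored supp B (some ∘ ω))} : ℝ)
      ≤ ∑ κ ∈ K, (dens {ω : ι → E | explored supp B (some ∘ ω) = κ} : ℝ) := by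
        exact_mod_cast (dens_le_dens hcover).trans dens_biUnion_le
    _ ≤ ∑ κ ∈ K, R * ∑ ω with explored supp B ω = κ, P ω := sum_le_sum hfiber
    _ ≤ ∑ κ, R * ∑ ω with explored supp B ω = κ, P ω := by
        refine sum_le_univ_sum_of_nonneg fun κ => mul_nonneg hR (sum_nonneg fun ω _ => ?_)
        exact prod_nonneg fun a _ => thinnedWeight_nonneg hp₀ hp₁ _
    _ = R := by
        rw [← mul_sum, sum_fiberwise, sum_prod_thinnedWeight, mul_one]

end Thinning

section Counting

lemma descFactorial_le_div_pow_mul_descFactorial {w n : ℕ} (h : w ≤ n) (k : ℕ) :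
    (w.descFactorial k : ℝ) ≤ ((w : ℝ) / n) ^ k * n.descFactorial k := by
  induction k with
  | zero => simp
  | succ k ih =>
    have hstep : ((w - k : ℕ) : ℝ) ≤ (w : ℝ) / n * (n - k : ℕ) := by
      rcases n.eq_zero_or_pos with rfl | hn
      · simp [Nat.le_zero.mp h]
      · rw [div_mul_eq_mul_div, le_div_iff₀ (by positivity)]
        norm_cast
        rw [Nat.sub_mul, Nat.mul_sub, mul_comm k n]
        exact Nat.sub_le_sub_left (Nat.mul_le_mul_right k h) _
    rw [Nat.descFactorial_succ, Nat.descFactorial_succ, Nat.cast_mul, Nat.cast_mul, pow_succ]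
    calc ((w - k : ℕ) : ℝ) * w.descFactorial k
        ≤ (w / n * (n - k : ℕ)) * ((w / n) ^ k * n.descFactorial k) := by gcongr
      _ = _ := by ring

/-- The set of variables of a constraint. -/
def edgeSupport {κ α : Type*} [Fintype κ] (e : κ ↪ α) : Finset α :=
  univ.map e

variable {κ α : Type*} [Fintype κ]

lemma edgeSupport_subset_iff {e : κ ↪ α} {U : Finset α} : edgeSupport e ⊆ U ↔ ∀ j, e j ∈ U := by
  simp [edgeSupport, subset_iff]

variable [Fintype α] [DecidableEq α]

lemma card_filter_edgeSupport_subset (U : Finset α) :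
    #{e : κ ↪ α | edgeSupport e ⊆ U} = (#U).descFactorial (Fintype.card κ) := by
  have hequiv := Fintype.card_congr (Equiv.codRestrict κ (U : Set α))
  simp only [mem_coe] at hequiv
  simp only [edgeSupport_subset_iff]
  rw [← Fintype.card_subtype, hequiv]
  simp [Fintype.card_embedding_eq]

lemma dens_filter_edgeSupport_subset_le (U : Finset α) :
    (dens {e : κ ↪ α | edgeSupport e ⊆ U} : ℝ) ≤ (U.dens : ℝ) ^ Fintype.card κ := by
  simp only [nnratCast_dens, card_filter_edgeSupport_subset, Fintype.card_embedding_eq]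
  exact div_le_of_le_mul₀ (by positivity) (by positivity)
    (descFactorial_le_div_pow_mul_descFactorial (card_le_univ U) _)

lemma dens_avoiding_edgeSupport_le [Nonempty α] (C : Finset α) :
    (dens (avoiding (edgeSupport (κ := κ)) C) : ℝ) ≤ (1 - C.dens : ℝ) ^ Fintype.card κ := by
  have hcompl : (Cᶜ.dens : ℝ) = 1 - C.dens := by
    rw [nnratCast_dens, nnratCast_dens, card_compl, Nat.cast_sub (card_le_univ C), sub_div,
      div_self (by positivity)]
  rw [← hcompl]
  simpa only [avoiding, subset_compl_iff_disjoint_right] using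
    dens_filter_edgeSupport_subset_le (κ := κ) Cᶜ

end Counting

section FirstMoment

variable {ι E : Type*} [Fintype ι] [DecidableEq ι] [Fintype E] [DecidableEq E]

lemma dens_le_card_filter_mem_le (A : Finset E) {z : ℝ} (hz : 0 ≤ z) (t : ℝ) :
    (dens {ω : ι → E | t ≤ #{a | ω a ∈ A}} : ℝ) ≤
      Real.exp (Fintype.card ι * (Real.exp z * A.dens) - z * t) := by
  set N : ℝ := (Fintype.card E : ℝ) with hN
  set f : E → ℝ := fun e => if e ∈ A then Real.exp z else 1 with hf
  have hprod (ω : ι → E) : ∏ a, f (ω a) = Real.exp (z * #{a | ω a ∈ A}) := by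
    rw [prod_ite, prod_const, prod_const_one, mul_one, ← Real.exp_nat_mul, mul_comm]
  have hdens : (A.dens : ℝ) * N = #A := by
    rw [hN]
    exact_mod_cast A.dens_mul_card
  have hsum : ∑ e, f e ≤ Real.exp (Real.exp z * A.dens) * N := by
    calc ∑ e, f e ≤ ∑ e, (1 + Real.exp z * if e ∈ A then 1 else 0) :=
          sum_le_sum fun e _ => by simp only [hf]; split_ifs <;> simp
      _ = Real.exp z * #A + N := by simp [sum_add_distrib, add_comm, mul_comm, hN]
      _ = (Real.exp z * A.dens + 1) * N := by rw [← hdens]; ring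
      _ ≤ _ := by gcongr; exact Real.add_one_le_exp _
  have hmoment : ∑ ω : ι → E, ∏ a, f (ω a) ≤
      Real.exp (Fintype.card ι * (Real.exp z * A.dens)) * N ^ Fintype.card ι := by
    rw [← Fintype.piFinset_univ, ← prod_univ_sum, prod_const, card_univ, Real.exp_nat_mul,
      ← mul_pow]
    gcongr
  have hmarkov : (#{ω : ι → E | t ≤ #{a | ω a ∈ A}} : ℝ) ≤
      ∑ ω : ι → E, Real.exp (-(z * t)) * ∏ a, f (ω a) := by
    rw [card_filter, Nat.cast_sum]
    refine sum_le_sum fun ω _ => ?_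
    rw [hprod, ← Real.exp_add]
    split_ifs with h
    · rw [Nat.cast_one]
      exact Real.one_le_exp (by nlinarith)
    · exact Nat.cast_zero.trans_le (Real.exp_nonneg _)
  rw [nnratCast_dens, Fintype.card_fun, Nat.cast_pow, sub_eq_neg_add, Real.exp_add, ← hN]
  refine div_le_of_le_mul₀ (by positivity) (by positivity) (hmarkov.trans ?_)
  rw [← mul_sum, mul_assoc]
  gcongr

lemma choose_le_exp_mul_div_pow (n s : ℕ) :
    (n.choose s : ℝ) ≤ Real.exp s * ((n : ℝ) / s) ^ s := by
  rcases s.eq_zero_or_pos with rfl | hs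
  · simp
  calc (n.choose s : ℝ) ≤ (n : ℝ) ^ s / s.factorial := Nat.choose_le_pow_div s n
    _ = (s : ℝ) ^ s / s.factorial * ((n : ℝ) / s) ^ s := by rw [div_pow]; field_simp
    _ ≤ Real.exp s * ((n : ℝ) / s) ^ s := by
        gcongr
        exact Real.pow_div_factorial_le_exp _ (Nat.cast_nonneg s) s

variable {κ α : Type*} [Fintype κ] [Fintype α] [DecidableEq α] {M θ : ℝ}

lemma dens_mul_card_le_card_filter_subset_le [Nonempty κ] {U : Finset α} (hU : U.Nonempty)
    (hι : (Fintype.card ι : ℝ) ≤ M * Fintype.card α) :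
    (dens {ω : ι → κ ↪ α | θ * #U ≤ #{a | edgeSupport (ω a) ⊆ U}} : ℝ) ≤
      Real.exp (#U * (M - (Fintype.card κ - 1) * θ * Real.log (Fintype.card α / #U))) := by
  set L : ℝ := Real.log (Fintype.card α / #U) with hL
  have hUpos : (0 : ℝ) < #U := Nat.cast_pos.mpr hU.card_pos
  have hUα : (#U : ℝ) ≤ Fintype.card α := Nat.cast_le.mpr (card_le_univ U)
  have hαpos : (0 : ℝ) < Fintype.card α := hUpos.trans_le hUα
  have hκ : (1 : ℝ) ≤ Fintype.card κ := Nat.one_le_cast.mpr Fintype.card_pos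
  have hdens : (U.dens : ℝ) = Real.exp (-L) := by
    rw [nnratCast_dens, hL, ← Real.log_inv, inv_div, Real.exp_log (by positivity)]
  have hz : 0 ≤ (Fintype.card κ - 1) * L :=
    mul_nonneg (sub_nonneg.mpr hκ) (Real.log_nonneg ((one_le_div hUpos).mpr hUα))
  have hexp : Real.exp ((Fintype.card κ - 1) * L) *
      (dens {e : κ ↪ α | edgeSupport e ⊆ U} : ℝ) ≤ U.dens := by
    calc _ ≤ Real.exp ((Fintype.card κ - 1) * L) * (U.dens : ℝ) ^ Fintype.card κ := by
          gcongr
          exact dens_filter_edgeSupport_subset_le U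
      _ = U.dens := by
          rw [hdens, ← Real.exp_nat_mul, ← Real.exp_add]
          ring_nf
  have hmean : Fintype.card ι * (U.dens : ℝ) ≤ M * #U := by
    calc Fintype.card ι * (U.dens : ℝ) ≤ M * Fintype.card α * U.dens := by gcongr
      _ = M * #U := by rw [nnratCast_dens]; field_simp
  have hchernoff := dens_le_card_filter_mem_le (ι := ι) {e : κ ↪ α | edgeSupport e ⊆ U} hz (θ * #U)
  simp only [mem_filter_univ] at hchernoff
  refine hchernoff.trans (Real.exp_le_exp.mpr ?_)
  calc _ ≤ Fintype.card ι * (U.dens : ℝ) - (Fintype.card κ - 1) * L * (θ * #U) := by gcongr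
    _ ≤ M * #U - (Fintype.card κ - 1) * L * (θ * #U) := by gcongr
    _ = _ := by ring

lemma dens_exists_dense_set_card_eq_le [Nonempty κ] {s : ℕ} (hs : 0 < s)
    (hι : (Fintype.card ι : ℝ) ≤ M * Fintype.card α)
    (hM : M + 3 ≤ ((Fintype.card κ - 1) * θ - 1) * Real.log (Fintype.card α / s)) :
    (dens {ω : ι → κ ↪ α | ∃ U : Finset α, #U = s ∧ θ * s ≤ #{a | edgeSupport (ω a) ⊆ U}} : ℝ) ≤
      Real.exp (-2 * s) := by
  set L : ℝ := Real.log (Fintype.card α / s)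
  set D : Finset α → Finset (ι → κ ↪ α) := fun U => {ω | θ * s ≤ #{a | edgeSupport (ω a) ⊆ U}}
  have hcover : ({ω | ∃ U : Finset α, #U = s ∧ θ * s ≤ #{a | edgeSupport (ω a) ⊆ U}} :
      Finset (ι → κ ↪ α)) ⊆ (powersetCard s univ).biUnion D := by
    intro ω hω
    obtain ⟨U, hU, hUω⟩ := mem_filter_univ ω |>.mp hω
    exact mem_biUnion.mpr
      ⟨U, mem_powersetCard_univ.mpr hU, mem_filter_univ ω |>.mpr hUω⟩
  have hD : ∀ U ∈ powersetCard s univ,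
      ((D U).dens : ℝ) ≤ Real.exp (s * (M - (Fintype.card κ - 1) * θ * L)) := by
    intro U hU
    obtain rfl := mem_powersetCard_univ.mp hU
    exact dens_mul_card_le_card_filter_subset_le (card_pos.mp hs) hι
  have hchoose : ((Fintype.card α).choose s : ℝ) ≤ Real.exp (s * (1 + L)) := by
    calc ((Fintype.card α).choose s : ℝ)
        ≤ Real.exp s * ((Fintype.card α : ℝ) / s) ^ s := choose_le_exp_mul_div_pow _ s
      _ ≤ Real.exp s * Real.exp L ^ s := by gcongr; exact Real.le_exp_log _
      _ = Real.exp (s * (1 + L)) := by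
          rw [← Real.exp_nat_mul, ← Real.exp_add, mul_add, mul_one]
  calc _ ≤ ∑ U ∈ powersetCard s univ, ((D U).dens : ℝ) := by
        exact_mod_cast (dens_le_dens hcover).trans dens_biUnion_le
    _ ≤ (Fintype.card α).choose s * Real.exp (s * (M - (Fintype.card κ - 1) * θ * L)) := by
        refine (sum_le_sum hD).trans_eq ?_
        rw [sum_const, card_powersetCard, card_univ, nsmul_eq_mul]
    _ ≤ Real.exp (s * (1 + L)) * Real.exp (s * (M - (Fintype.card κ - 1) * θ * L)) := by gcongr
    _ = Real.exp (s * (M + 1 - ((Fintype.card κ - 1) * θ - 1) * L)) := by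
        rw [← Real.exp_add]
        ring_nf
    _ ≤ Real.exp (s * -2) := by gcongr; linarith
    _ = Real.exp (-2 * s) := by rw [mul_comm]

lemma sum_Icc_exp_neg_two_mul_le (b N : ℕ) :
    ∑ s ∈ Icc b N, Real.exp (-2 * s) ≤ 2 * Real.exp (-b) := by
  have hhalf : Real.exp (-1) ≤ 1 / 2 := by
    rw [Real.exp_neg, one_div]
    exact inv_anti₀ two_pos (by linarith [Real.add_one_le_exp 1])
  calc ∑ s ∈ Icc b N, Real.exp (-2 * s)
      ≤ ∑ s ∈ Icc b N, Real.exp (-b) * (1 / 2) ^ s := by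
        refine sum_le_sum fun s hs => ?_
        have hbs : (b : ℝ) ≤ s := Nat.cast_le.mpr (mem_Icc.mp hs).1
        calc Real.exp (-2 * s) = Real.exp (-s) * Real.exp (-1) ^ s := by
              rw [← Real.exp_nat_mul, ← Real.exp_add]; ring_nf
          _ ≤ Real.exp (-b) * (1 / 2) ^ s := by gcongr
    _ ≤ Real.exp (-b) * ∑ s ∈ range (N + 1), (1 / 2) ^ s := by
        rw [← mul_sum]
        gcongr
        exact fun s hs => mem_range_succ_iff.mpr (mem_Icc.mp hs).2
    _ ≤ Real.exp (-b) * 2 := by gcongr; exact sum_geometric_two_le _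
    _ = 2 * Real.exp (-b) := mul_comm _ _

lemma dens_exists_dense_set_le [Nonempty κ] {b : ℕ} {ε : ℝ} (hb : 0 < b)
    (hι : (Fintype.card ι : ℝ) ≤ M * Fintype.card α)
    (hθ : 0 ≤ (Fintype.card κ - 1) * θ - 1) (hε : 0 < ε)
    (hM : M + 3 ≤ ((Fintype.card κ - 1) * θ - 1) * Real.log ε⁻¹) :
    (dens {ω : ι → κ ↪ α | ∃ U : Finset α, b ≤ #U ∧ #U ≤ ε * Fintype.card α ∧
      θ * #U ≤ #{a | edgeSupport (ω a) ⊆ U}} : ℝ) ≤ 2 * Real.exp (-b) := by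
  set D : ℕ → Finset (ι → κ ↪ α) :=
    fun s => {ω | ∃ U : Finset α, #U = s ∧ θ * s ≤ #{a | edgeSupport (ω a) ⊆ U}}
  have hcover : ({ω | ∃ U : Finset α, b ≤ #U ∧ #U ≤ ε * Fintype.card α ∧
      θ * #U ≤ #{a | edgeSupport (ω a) ⊆ U}} : Finset (ι → κ ↪ α)) ⊆
      (Icc b ⌊ε * Fintype.card α⌋₊).biUnion D := by
    intro ω hω
    obtain ⟨U, hbU, hUε, hUθ⟩ := mem_filter_univ ω |>.mp hω
    exact mem_biUnion.mpr
      ⟨#U, mem_Icc.mpr ⟨hbU, Nat.le_floor hUε⟩, mem_filter_univ ω |>.mpr ⟨U, rfl, hUθ⟩⟩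
  have hD : ∀ s ∈ Icc b ⌊ε * Fintype.card α⌋₊, ((D s).dens : ℝ) ≤ Real.exp (-2 * s) := by
    intro s hs
    obtain ⟨hbs, hsε⟩ := mem_Icc.mp hs
    have hspos : 0 < s := hb.trans_le hbs
    have hsε' : (s : ℝ) ≤ ε * Fintype.card α := (Nat.le_floor_iff (by positivity)).mp hsε
    refine dens_exists_dense_set_card_eq_le hspos hι (hM.trans ?_)
    gcongr
    rw [le_div_iff₀ (by positivity), inv_mul_le_iff₀ hε]
    exact hsε'
  calc _ ≤ ∑ s ∈ Icc b ⌊ε * Fintype.card α⌋₊, ((D s).dens : ℝ) := by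
        exact_mod_cast (dens_le_dens hcover).trans dens_biUnion_le
    _ ≤ ∑ s ∈ Icc b ⌊ε * Fintype.card α⌋₊, Real.exp (-2 * s) := sum_le_sum hD
    _ ≤ 2 * Real.exp (-b) := sum_Icc_exp_neg_two_mul_le b _

end FirstMoment

section Parameters

/-- Constants for which the argument works, at edge density `μ` and uniformity `k`: hyperedges
survive the thinning with probability `p`, vertex sets spanning at most `θ` hyperedges per vertex
count as sparse, hulls occupy at most a fraction `ε` of the vertices, and `c` is the exponential
rate obtained. -/
structure IsAdmissible (k : ℕ) (μ p θ ε c : ℝ) : Prop where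
  p_pos : 0 < p
  p_lt_one : p < 1
  θ_pos : 0 < θ
  ε_mem : ε ∈ Set.Ioo 0 1
  c_mem : c ∈ Set.Ioc 0 1
  mul_le : θ * ε ≤ μ
  one_lt_mul : 1 < ((k : ℝ) - 1) * θ
  rate_le : c - θ * Real.log p ≤ (μ - θ * ε) * (k * (1 - p)) / (1 + k * (1 - p) * ε)
  le_log : μ + 4 ≤ (((k : ℝ) - 1) * θ - 1) * Real.log ε⁻¹

lemma exists_neg_mul_log_lt {k : ℕ} (hk : 2 ≤ k) {μ : ℝ} (hμ : 1 / ((k : ℝ) * (k - 1)) < μ) :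
    ∃ p ∈ Set.Ioo (0 : ℝ) 1, ∃ θ : ℝ, 1 < ((k : ℝ) - 1) * θ ∧
      -θ * Real.log p < μ * (k * (1 - p)) := by
  have hk1 : (0 : ℝ) < k - 1 := sub_pos.mpr (Nat.one_lt_cast.mpr hk)
  have hk0 : (0 : ℝ) < k := by linarith
  have hμ0 : 0 < μ := (one_div_pos.mpr (mul_pos hk0 hk1)).trans hμ
  -- The thinned hypergraph is critical for this `p`.
  set p : ℝ := 1 / (μ * (k * (k - 1))) with hp
  have hp0 : 0 < p := by positivity
  have hp1 : p < 1 := by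
    rwa [hp, div_lt_one (by positivity), ← div_lt_iff₀ (by positivity)]
  have hlog : 0 < -Real.log p := neg_pos.mpr (Real.log_neg hp0 hp1)
  have hlog_lt : -Real.log p < p⁻¹ - 1 := by
    rw [← Real.log_inv]
    exact Real.log_lt_sub_one_of_pos (inv_pos.mpr hp0) (one_lt_inv₀ hp0 |>.mpr hp1).ne'
  have hgap : (k - 1) * (μ * (k * (1 - p))) = p⁻¹ - 1 := by
    rw [hp]
    field_simp
  obtain ⟨θ, hθ, hθp⟩ :
      ∃ θ, 1 / ((k : ℝ) - 1) < θ ∧ θ < μ * (k * (1 - p)) / -Real.log p := by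
    refine exists_between ?_
    rw [div_lt_div_iff₀ hk1 hlog]
    linarith
  refine ⟨p, ⟨hp0, hp1⟩, θ, ?_, ?_⟩
  · rwa [div_lt_iff₀' hk1] at hθ
  · rw [lt_div_iff₀ hlog] at hθp
    linarith

lemma exists_isAdmissible {k : ℕ} (hk : 2 ≤ k) {μ : ℝ} (hμ : 1 / ((k : ℝ) * (k - 1)) < μ) :
    ∃ p θ ε c, IsAdmissible k μ p θ ε c := by
  have hk1 : (0 : ℝ) < k - 1 := sub_pos.mpr (Nat.one_lt_cast.mpr hk)
  have hμ0 : 0 < μ := (one_div_nonneg.mpr (mul_nonneg k.cast_nonneg hk1.le)).trans_lt hμ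
  obtain ⟨p, ⟨hp0, hp1⟩, θ, hθ, hgap⟩ := exists_neg_mul_log_lt hk hμ
  obtain ⟨c, ⟨hc0, hc1⟩, hc⟩ : ∃ c ∈ Set.Ioc (0 : ℝ) 1,
      c - θ * Real.log p < μ * (k * (1 - p)) := by
    obtain ⟨c, hc0, hc⟩ := exists_between (sub_pos.mpr hgap)
    refine ⟨min c 1, ⟨lt_min hc0 one_pos, min_le_right c 1⟩, ?_⟩
    linarith [min_le_left c 1]
  have hrate : ∀ᶠ ε in nhdsWithin (0 : ℝ) (Set.Ioi 0),
      c - θ * Real.log p ≤ (μ - θ * ε) * (k * (1 - p)) / (1 + k * (1 - p) * ε) := by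
    have hcont : ContinuousAt
        (fun ε : ℝ => (μ - θ * ε) * (k * (1 - p)) / (1 + k * (1 - p) * ε)) 0 :=
      ContinuousAt.div (by fun_prop) (by fun_prop) (by simp)
    exact ((hcont.eventually_const_lt (by simpa using hc)).filter_mono nhdsWithin_le_nhds).mono
      fun ε => le_of_lt
  have hmul : ∀ᶠ ε in nhdsWithin (0 : ℝ) (Set.Ioi 0), θ * ε ≤ μ := by
    have hcont : ContinuousAt (fun ε : ℝ => θ * ε) 0 := by fun_prop
    exact ((hcont.eventually_lt_const (by simpa using hμ0)).filter_mono nhdsWithin_le_nhds).mono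
      fun ε => le_of_lt
  have hlog : ∀ᶠ ε in nhdsWithin (0 : ℝ) (Set.Ioi 0),
      μ + 4 ≤ (((k : ℝ) - 1) * θ - 1) * Real.log ε⁻¹ :=
    ((Real.tendsto_log_atTop.comp tendsto_inv_nhdsGT_zero).const_mul_atTop
      (sub_pos.mpr hθ)).eventually_ge_atTop _
  have hmem : ∀ᶠ ε in nhdsWithin (0 : ℝ) (Set.Ioi 0), ε ∈ Set.Ioo (0 : ℝ) 1 :=
    Ioo_mem_nhdsGT one_pos
  obtain ⟨ε, hrate, hmul, hlog, hmem⟩ := (hrate.and (hmul.and (hlog.and hmem))).exists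
  have hθ0 : 0 < θ := (mul_pos_iff_of_pos_left hk1).mp (one_pos.trans hθ)
  exact ⟨p, θ, ε, c, hp0, hp1, hθ0, hmem, ⟨hc0, hc1⟩, hmul, hθ, hrate, hlog⟩

-- To be read with `N` vertices, a hull of density `σ`, `j` revealed and `l` unrevealed
-- hyperedges.
lemma IsAdmissible.exp_le_pow_mul_pow {k : ℕ} {μ p θ ε c : ℝ} (h : IsAdmissible k μ p θ ε c)
    {σ N : ℝ} (hN : 0 ≤ N) (hσ : σ ∈ Set.Icc 0 ε) {j l : ℕ} (hj : j ≤ θ * (σ * N))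
    (hjl : μ * N ≤ j + l) :
    Real.exp (c * (σ * N)) ≤ p ^ j * (1 + k * (1 - p) * σ) ^ l := by
  set g : ℝ := k * (1 - p)
  have hg : 0 ≤ g := mul_nonneg k.cast_nonneg (sub_nonneg.mpr h.p_lt_one.le)
  have hε : 0 ≤ ε := h.ε_mem.1.le
  obtain ⟨hσ₀, hσε⟩ := hσ
  have hbase : 0 < 1 + g * σ := by positivity
  have hlog : g * σ / (1 + g * ε) ≤ Real.log (1 + g * σ) := by
    calc g * σ / (1 + g * ε) ≤ g * σ / (1 + g * σ) := by gcongr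
      _ = 1 - (1 + g * σ)⁻¹ := by field_simp; ring
      _ ≤ Real.log (1 + g * σ) := Real.one_sub_inv_le_log_of_pos hbase
  have hl : (μ - θ * ε) * N ≤ l := by
    have hjε : j ≤ θ * (ε * N) := by
      have hθ := h.θ_pos
      exact hj.trans (by gcongr)
    linarith
  have hp : θ * (σ * N) * Real.log p ≤ j * Real.log p :=
    mul_le_mul_of_nonpos_right hj (Real.log_nonpos h.p_pos.le h.p_lt_one.le)
  calc Real.exp (c * (σ * N))
      ≤ Real.exp (j * Real.log p + l * Real.log (1 + g * σ)) := by
        gcongr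
        calc c * (σ * N) = θ * (σ * N) * Real.log p + (c - θ * Real.log p) * (σ * N) := by ring
          _ ≤ j * Real.log p + (μ - θ * ε) * g / (1 + g * ε) * (σ * N) := by
              gcongr
              exact h.rate_le
          _ = j * Real.log p + (μ - θ * ε) * N * (g * σ / (1 + g * ε)) := by ring
          _ ≤ j * Real.log p + l * Real.log (1 + g * σ) := by gcongr
    _ = p ^ j * (1 + g * σ) ^ l := by
        rw [Real.exp_add, Real.exp_nat_mul, Real.exp_nat_mul, Real.exp_log h.p_pos,
          Real.exp_log hbase]

lemma mul_one_add_le_of_le_one_sub_pow {k : ℕ} {p σ r : ℝ} (hp : p ∈ Set.Icc 0 1)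
    (hσ : σ ∈ Set.Icc 0 1) (hr : r ≤ (1 - σ) ^ k) :
    r * (1 + k * (1 - p) * σ) ≤ 1 - p + p * r := by
  obtain ⟨hσ₀, hσ₁⟩ := hσ
  have hbernoulli : r * (1 + k * σ) ≤ 1 := by
    calc r * (1 + k * σ) ≤ (1 - σ) ^ k * (1 + σ) ^ k := by
          gcongr
          exact one_add_mul_le_pow (by linarith) k
      _ = (1 - σ ^ 2) ^ k := by rw [← mul_pow]; congr 1; ring
      _ ≤ 1 := pow_le_one₀ (by nlinarith) (by nlinarith)
  calc r * (1 + k * (1 - p) * σ) = (1 - p) * (r * (1 + k * σ)) + p * r := by ring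
    _ ≤ (1 - p) * 1 + p * r := by
        gcongr
        exact sub_nonneg.mpr hp.2
    _ = 1 - p + p * r := by rw [mul_one]

lemma IsAdmissible.pow_le_exp_neg_mul {k : ℕ} {μ p θ ε c : ℝ} (h : IsAdmissible k μ p θ ε c)
    {σ N r : ℝ} (hN : 0 ≤ N) (hσ : σ ∈ Set.Icc 0 ε) {j l : ℕ} (hj : j ≤ θ * (σ * N))
    (hjl : μ * N ≤ j + l) (hr₀ : 0 ≤ r) (hr : r ≤ (1 - σ) ^ k) :
    r ^ l ≤ Real.exp (-(c * (σ * N))) * (p ^ j * (1 - p + p * r) ^ l) := by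
  have hbase : r * (1 + k * (1 - p) * σ) ≤ 1 - p + p * r :=
    mul_one_add_le_of_le_one_sub_pow ⟨h.p_pos.le, h.p_lt_one.le⟩
      ⟨hσ.1, hσ.2.trans h.ε_mem.2.le⟩ hr
  have hnonneg : 0 ≤ r * (1 + k * (1 - p) * σ) :=
    mul_nonneg hr₀ (add_nonneg zero_le_one (mul_nonneg (mul_nonneg k.cast_nonneg
      (sub_nonneg.mpr h.p_lt_one.le)) hσ.1))
  have hp := h.p_pos.le
  rw [Real.exp_neg, inv_mul_eq_div, le_div_iff₀ (Real.exp_pos _)]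
  calc r ^ l * Real.exp (c * (σ * N))
      ≤ r ^ l * (p ^ j * (1 + k * (1 - p) * σ) ^ l) := by
        gcongr
        exact h.exp_le_pow_mul_pow hN hσ hj hjl
    _ = p ^ j * (r * (1 + k * (1 - p) * σ)) ^ l := by rw [mul_pow]; ring
    _ ≤ p ^ j * (1 - p + p * r) ^ l := by gcongr

end Parameters

section LargeSaturatedSet

variable {ι κ α : Type*} [Fintype ι] [DecidableEq ι] [Fintype κ] [Nonempty κ] [Fintype α]
  [DecidableEq α] {μ p θ ε c : ℝ}

lemma dens_sparse_hull_le [Nonempty (κ ↪ α)] (h : IsAdmissible (Fintype.card κ) μ p θ ε c)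
    (hι : μ * Fintype.card α ≤ Fintype.card ι) (B : Finset α) :
    (dens {ω : ι → κ ↪ α | #(hull edgeSupport B (some ∘ ω)) ≤ ε * Fintype.card α ∧
      #{a | edgeSupport (ω a) ⊆ hull edgeSupport B (some ∘ ω)} ≤
        θ * #(hull edgeSupport B (some ∘ ω))} : ℝ) ≤ Real.exp (-(c * #B)) := by
  classical
  have hα : Nonempty α := ‹Nonempty (κ ↪ α)›.map fun e => e (Classical.arbitrary κ)
  have hp := h.p_pos.le
  have hp₁ := sub_nonneg.mpr h.p_lt_one.le
  have hne (e : κ ↪ α) : (edgeSupport e).Nonempty := univ_nonempty.map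
  have hbound := dens_explored_le_of_thinned_le (ι := ι) (B := B) hne hp h.p_lt_one.le
    (Real.exp_nonneg (-(c * #B)))
    (fun κ' => #(hull edgeSupport B κ') ≤ ε * Fintype.card α ∧
      #{a | (κ' a).isSome} ≤ θ * #(hull edgeSupport B κ')) ?_
  · simpa only [hull_explored, isSome_explored_some_comp] using hbound
  rintro κ' - ⟨hε, hθ⟩
  set C := hull edgeSupport B κ'
  have hcard : (C.dens : ℝ) * Fintype.card α = #C := by exact_mod_cast C.dens_mul_card
  have hdens : (C.dens : ℝ) ≤ ε := by
    rw [nnratCast_dens]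
    exact div_le_of_le_mul₀ (by positivity) h.ε_mem.1.le hε
  have hsum : (#{a | (κ' a).isSome} : ℝ) + #{a | ¬(κ' a).isSome} = Fintype.card ι := by
    exact_mod_cast card_filter_add_card_filter_not (s := univ) fun a : ι => (κ' a).isSome
  have hpow := h.pow_le_exp_neg_mul (Nat.cast_nonneg (Fintype.card α)) ⟨by positivity, hdens⟩
    (hcard.symm ▸ hθ) (hι.trans_eq hsum.symm) (by positivity) (dens_avoiding_edgeSupport_le C)
  rw [hcard] at hpow
  refine hpow.trans ?_
  have hBC : #B ≤ #C := card_le_card subset_hull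
  have hc := h.c_mem.1
  gcongr

open Classical in
lemma dens_exists_isSaturated_le [Nonempty (κ ↪ α)]
    (h : IsAdmissible (Fintype.card κ) μ p θ ε c) (hι : μ * Fintype.card α ≤ Fintype.card ι)
    (hι' : (Fintype.card ι : ℝ) ≤ (μ + 1) * Fintype.card α) {B : Finset α} (hB : B.Nonempty) :
    (dens {ω : ι → κ ↪ α | ∃ U, Disjoint B U ∧ (1 - ε) * Fintype.card α ≤ #U ∧
      IsSaturated edgeSupport (some ∘ ω) U} : ℝ) ≤ 3 * Real.exp (-(c * #B)) := by
  set D : Finset (ι → κ ↪ α) := {ω | ∃ U : Finset α, #B ≤ #U ∧ #U ≤ ε * Fintype.card α ∧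
    θ * #U ≤ #{a | edgeSupport (ω a) ⊆ U}}
  set S : Finset (ι → κ ↪ α) := {ω | #(hull edgeSupport B (some ∘ ω)) ≤ ε * Fintype.card α ∧
    #{a | edgeSupport (ω a) ⊆ hull edgeSupport B (some ∘ ω)} ≤
      θ * #(hull edgeSupport B (some ∘ ω))}
  have hcover : ({ω | ∃ U, Disjoint B U ∧ (1 - ε) * Fintype.card α ≤ #U ∧
      IsSaturated edgeSupport (some ∘ ω) U} : Finset (ι → κ ↪ α)) ⊆ S ∪ D := by
    intro ω hω
    obtain ⟨U, hBU, hU, hUω⟩ := mem_filter_univ ω |>.mp hω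
    set C := hull edgeSupport B (some ∘ ω)
    have hCU : C ⊆ Uᶜ := hull_subset (subset_compl_iff_disjoint_right.mpr hBU) hUω.compl
    have hC : #C ≤ ε * Fintype.card α := by
      have hcard : (#C : ℝ) + #U ≤ Fintype.card α := by
        exact_mod_cast card_compl_add_card U ▸ Nat.add_le_add_right (card_le_card hCU) _
      linarith
    rcases le_total (#{a | edgeSupport (ω a) ⊆ C} : ℝ) (θ * #C) with hsparse | hdense
    · exact mem_union_left D (mem_filter_univ ω |>.mpr ⟨hC, hsparse⟩)
    · exact mem_union_right S
        (mem_filter_univ ω |>.mpr ⟨C, card_le_card subset_hull, hC, hdense⟩)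
  have hS : (S.dens : ℝ) ≤ Real.exp (-(c * #B)) := dens_sparse_hull_le h hι B
  have hD : (D.dens : ℝ) ≤ 2 * Real.exp (-#B) :=
    dens_exists_dense_set_le hB.card_pos hι' (sub_nonneg.mpr h.one_lt_mul.le) h.ε_mem.1
      (by linarith [h.le_log])
  calc _ ≤ (S.dens : ℝ) + D.dens := by
        exact_mod_cast (dens_le_dens hcover).trans (dens_union_le S D)
    _ ≤ Real.exp (-(c * #B)) + 2 * Real.exp (-(c * #B)) := by
        gcongr
        refine hD.trans ?_
        gcongr
        exact mul_le_of_le_one_left (Nat.cast_nonneg _) h.c_mem.2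
    _ = 3 * Real.exp (-(c * #B)) := by ring

end LargeSaturatedSet

lemma prG_eq_dens (n m k : ℕ) (P : (Fin m → (Fin k ↪ Fin n)) → Prop) [DecidablePred P] :
    prG n m k P = (dens {ω | P ω} : ℝ) := by
  rw [prG, nnratCast_dens]
  congr!

lemma isStoppingSet_iff_isSaturated {n m k : ℕ} {ω : Fin m → (Fin k ↪ Fin n)}
    {V : Finset (Fin n)} :
    IsStoppingSet k ω V ↔ IsSaturated edgeSupport (some ∘ ω) V := by
  have hnbhd (a : Fin m) : nbhd ω a = edgeSupport (ω a) := (map_eq_image _ _).symm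
  have hcard (a : Fin m) : #(edgeSupport (ω a)) = k := by simp [edgeSupport]
  simp only [IsStoppingSet, IsSaturated, Function.comp_apply, Option.mem_some_iff, forall_eq',
    hnbhd]
  refine forall_congr' fun a => ?_
  rw [or_comm, card_eq_zero, ← disjoint_iff_inter_eq_empty]
  refine or_congr_left ⟨fun h => ?_, fun h => ?_⟩
  · exact inter_eq_left.mp (eq_of_subset_of_card_le inter_subset_left ((hcard a).trans_le h))
  · rw [inter_eq_left.mpr h, hcard]

open Classical in
lemma prG_exists_isStoppingSet_le {n m k u : ℕ} {μ p θ ε c : ℝ} (h : IsAdmissible k μ p θ ε c)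
    (hk : 0 < k) (hkn : k ≤ n) (hu : 0 < u) (hm : μ * n ≤ m) (hm' : (m : ℝ) ≤ (μ + 1) * n) :
    prG n m k (fun ω => ∃ V : Finset (Fin n), (∀ i ∈ V, u ≤ (i : ℕ)) ∧
      (1 - ε) * n ≤ (#V : ℝ) ∧ IsStoppingSet k ω V) ≤ 3 * Real.exp (-(c * u)) := by
  have : Nonempty (Fin k) := ⟨⟨0, hk⟩⟩
  have : Nonempty (Fin k ↪ Fin n) := ⟨Fin.castLEEmb hkn⟩
  rw [prG_eq_dens]
  rcases le_or_gt u n with hun | hnu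
  · set B : Finset (Fin n) := {i | (i : ℕ) < u}
    have hB : #B = u := by rw [Fin.card_filter_val_lt, min_eq_right hun]
    have hdisj (V : Finset (Fin n)) : (∀ i ∈ V, u ≤ (i : ℕ)) ↔ Disjoint B V := by
      simp [B, disjoint_right]
    have hmain := dens_exists_isSaturated_le (ι := Fin m) (κ := Fin k) (α := Fin n) (B := B)
      (by rwa [Fintype.card_fin]) (by simpa using hm) (by simpa using hm')
      (card_pos.mp (hB ▸ hu))
    simpa only [hdisj, isStoppingSet_iff_isSaturated, Fintype.card_fin, hB] using hmain
  · have hempty : ({ω | ∃ V : Finset (Fin n), (∀ i ∈ V, u ≤ (i : ℕ)) ∧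
        (1 - ε) * n ≤ (#V : ℝ) ∧ IsStoppingSet k ω V} : Finset (Fin m → (Fin k ↪ Fin n))) = ∅ := by
      refine filter_false_of_mem fun ω _ ⟨V, hV, hcard, _⟩ => hcard.not_gt ?_
      have hV₀ : V = ∅ := eq_empty_of_forall_notMem fun i hi => by have := hV i hi; lia
      rw [hV₀, card_empty, Nat.cast_zero]
      exact mul_pos (sub_pos.mpr h.ε_mem.2) (Nat.cast_pos.mpr (hk.trans_le hkn))
    rw [hempty, dens_empty, NNRat.cast_zero]
    positivity

theorem stmt9_general (k : ℕ) (hk : 2 ≤ k)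
    (μ : ℝ) (hμ : 1 / ((k : ℝ) * ((k : ℝ) - 1)) < μ)
    (u : ℕ → ℕ) (hu : Tendsto u atTop atTop) :
    ∃ α ∈ Set.Ioo (0 : ℝ) 1, ∃ c > (0 : ℝ), ∀ᶠ n in atTop,
      prG n ⌈μ * (n : ℝ)⌉₊ k (fun ω : Fin ⌈μ * (n : ℝ)⌉₊ → (Fin k ↪ Fin n) =>
        ∃ V : Finset (Fin n), (∀ i ∈ V, u n ≤ (i : ℕ)) ∧
          α * n ≤ (V.card : ℝ) ∧ IsStoppingSet k ω V)
      ≤ Real.exp (-c * u n) := by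
  obtain ⟨p, θ, ε, c, h⟩ := exists_isAdmissible hk hμ
  have hμ₀ : 0 ≤ μ := (mul_pos h.θ_pos h.ε_mem.1).le.trans h.mul_le
  have hc : 0 < c / 2 := half_pos h.c_mem.1
  refine ⟨1 - ε, ⟨by linarith [h.ε_mem.2], by linarith [h.ε_mem.1]⟩, c / 2, hc, ?_⟩
  have hexp : Tendsto (fun n => Real.exp (c / 2 * u n)) atTop atTop :=
    Real.tendsto_exp_atTop.comp
      ((tendsto_natCast_atTop_atTop.comp hu).const_mul_atTop hc)
  filter_upwards [hexp.eventually_ge_atTop 3, hu.eventually_ge_atTop 1, eventually_ge_atTop k]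
    with n hexp hun hkn
  have hceil : (⌈μ * n⌉₊ : ℝ) ≤ (μ + 1) * n := by
    have hn : (1 : ℝ) ≤ n := Nat.one_le_cast.mpr (by lia)
    linarith [Nat.ceil_lt_add_one (a := μ * n) (by positivity)]
  calc _ ≤ 3 * Real.exp (-(c * u n)) :=
        prG_exists_isStoppingSet_le h (by lia) hkn hun (Nat.le_ceil _) hceil
    _ ≤ Real.exp (c / 2 * u n) * Real.exp (-(c * u n)) := by gcongr
    _ = Real.exp (-(c / 2) * u n) := by rw [← Real.exp_add]; ring_nf

/-- Lemma `lem:2large`: for `m = ⌈μn⌉` with `μ > 1/(k(k-1))`, there are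
`α ∈ (0,1)` and `c > 0` such that the probability of a `k`-stopping set of size at least
`αn` inside `{u(n)+1,…,n}` is at most `exp(-c u(n))` for large `n`. -/
theorem stmt9 (k : ℕ) (hk : 2 ≤ k)
    (μ : ℝ) (hμ : 1 / ((k : ℝ) * ((k : ℝ) - 1)) < μ)
    (u : ℕ → ℕ) (hu : UGood u) :
    ∃ α ∈ Set.Ioo (0 : ℝ) 1, ∃ c > (0 : ℝ), ∀ᶠ n in atTop,
      prG n ⌈μ * (n : ℝ)⌉₊ k (fun ω : Fin ⌈μ * (n : ℝ)⌉₊ → (Fin k ↪ Fin n) =>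
        ∃ V : Finset (Fin n), (∀ i ∈ V, u n ≤ (i : ℕ)) ∧
          α * n ≤ (V.card : ℝ) ∧ IsStoppingSet k ω V)
      ≤ Real.exp (-c * u n) :=
  stmt9_general k hk μ hμ u (tendsto_natCast_atTop_iff.mp hu.1)
end
end
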